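/- arXiv:1002.1989 — 4 statements merged into one kernel-verified Lean document; each statement's English description precedes it below -/
import Mathlib

section
/- Suppose ℏ is a real constant, A₁,A₂,A₃,A₄,B₀,B₁,B₂,C₁,C₂,D₀ are real constants, R : (0,∞) → ℝ and S : ℝ → ℝ are smooth, V(r,θ) = R(r) + S(θ)/r², and smooth functions G₁, G₂ : (0,∞) × ℝ → ℝ satisfy the four determining equations (E1)–(E4) for all r > 0 and all θ ∈ ℝ. Then either A₁ = A₂ = A₃ = A₄ = B₁ = B₂ = C₁ = C₂ = 0 (with no restriction on R), or there exist real constants a₃, a₄, c₀, c₂ such that R(r) = a₃/r + a₄ r² + c₀ + c₂/r² for all r > 0, with a₃·a₄ = 0, and moreover a₄ ≠ 0 implies C₁ = C₂ = 0. -/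
open Real

/-- The coefficient function `F₁(θ)` of the third order integral. -/
noncomputable def F₁ (A₁ A₂ A₃ A₄ θ : ℝ) : ℝ :=
  A₁ * cos (3 * θ) + A₂ * sin (3 * θ) + A₃ * cos θ + A₄ * sin θ

/-- The coefficient function `F₂(r,θ)` of the third order integral. -/
noncomputable def F₂ (A₁ A₂ A₃ A₄ B₀ B₁ B₂ r θ : ℝ) : ℝ :=
  (1 / r) * (-3 * A₁ * sin (3 * θ) + 3 * A₂ * cos (3 * θ) - A₃ * sin θ + A₄ * cos θ)
    + B₁ * cos (2 * θ) + B₂ * sin (2 * θ) + B₀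

/-- The coefficient function `F₃(r,θ)` of the third order integral. -/
noncomputable def F₃ (A₁ A₂ A₃ A₄ B₁ B₂ C₁ C₂ r θ : ℝ) : ℝ :=
  (1 / r ^ 2) * (-3 * A₁ * cos (3 * θ) - 3 * A₂ * sin (3 * θ) + A₃ * cos θ + A₄ * sin θ)
    + (1 / r) * (-2 * B₁ * sin (2 * θ) + 2 * B₂ * cos (2 * θ))
    + C₁ * cos θ + C₂ * sin θ

/-- The coefficient function `F₄(r,θ)` of the third order integral. -/
noncomputable def F₄ (A₁ A₂ A₃ A₄ B₀ B₁ B₂ C₁ C₂ D₀ r θ : ℝ) : ℝ :=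
  (1 / r ^ 3) * (A₁ * sin (3 * θ) - A₂ * cos (3 * θ) - A₃ * sin θ + A₄ * cos θ)
    + (1 / r ^ 2) * (-B₁ * cos (2 * θ) - B₂ * sin (2 * θ) + B₀)
    + (1 / r) * (-C₁ * sin θ + C₂ * cos θ) + D₀

/-!
Integrating (E2) and (E4) in `r` expresses `G₁` and `G₂` through `R`, the primitive `Q` of `R/r²`,
and two angular functions `g`, `g₂`. Then (E3) becomes linear in `R`: its `r`-dependent coefficients
are the harmonics `cos 3θ, sin 3θ, cos θ, sin θ, cos 2θ, sin 2θ`, and modulo the span of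
`1, 1/r, 1/r², 1/r³` the factor of each harmonic vanishes. Every nonzero leading coefficient thereby
gives an ordinary differential equation which makes `R` a Laurent polynomial, and comparing powers
of `r` in (E1) removes the terms that are not allowed.

The exception is `A₁ = A₂ = B₁ = B₂ = 0` with `(C₁, C₂) = l (A₃, A₄)`. Here (E3) only says that
`(1 + l r²) R' - R/r - Q` is a combination of `1, 1/r, 1/r², 1/r³`, and it also determines `S` and
`g` as solutions of linear oscillator equations. If `g` is forced at resonance, hence not
`2π`-periodic, comparing (E1) at `θ` and `θ + 2π` puts `r² R'` in the span of
`1, 1/r, 1/r², 1/r³`. Otherwise `R` can only acquire a multiple of `1/√(1 + l r²)`, and this is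
excluded by (E1), because `√(1 + l r²)` is not a rational function of `r`.
-/

open Set
open scoped ContDiff

local notation:max f "⁽¹⁾" => deriv f
local notation:max f "⁽²⁾" => deriv (deriv f)
local notation:max f "⁽³⁾" => deriv (deriv (deriv f))

theorem eq_zero_of_forall_pos_sum_mul_pow_eq_zero {n : ℕ} {c : Fin n → ℝ}
    (h : ∀ r : ℝ, 0 < r → ∑ i, c i * r ^ (i : ℕ) = 0) : c = 0 :=
  Matrix.eq_zero_of_forall_index_sum_mul_pow_eq_zero (f := fun j : Fin n => (j + 1 : ℝ))
    (fun i j hij => Fin.ext (by simpa using hij)) fun j => h _ (by positivity)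

theorem hasDerivAt_const_div_pow (a : ℝ) (n : ℕ) {x : ℝ} (hx : x ≠ 0) :
    HasDerivAt (fun x => a / x ^ n) (-(n * a) / x ^ (n + 1)) x := by
  have h := (hasDerivAt_const x a).div (hasDerivAt_pow n x) (pow_ne_zero n hx)
  refine h.congr_deriv ?_
  cases n with
  | zero => simp
  | succ n => simp only [Nat.add_sub_cancel]; field_simp; ring

theorem exists_eq_add_const_of_hasDerivAt {φ ψ D : ℝ → ℝ} {a : ℝ}
    (hφ : ∀ x, a < x → HasDerivAt φ (D x) x) (hψ : ∀ x, a < x → HasDerivAt ψ (D x) x) :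
    ∃ k, ∀ x, a < x → φ x = ψ x + k :=
  isOpen_Ioi.exists_eq_add_of_deriv_eq isPreconnected_Ioi
    (fun x hx => (hφ x hx).differentiableAt.differentiableWithinAt)
    (fun x hx => (hψ x hx).differentiableAt.differentiableWithinAt)
    fun x hx => by rw [(hφ x hx).deriv, (hψ x hx).deriv]

theorem eq_of_forall_hasDerivAt_zero {φ : ℝ → ℝ} (h : ∀ t, HasDerivAt φ 0 t) (x y : ℝ) :
    φ x = φ y :=
  is_const_of_deriv_eq_zero (fun t => (h t).differentiableAt) (fun t => (h t).deriv) x y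

theorem hasDerivAt_cos_const_mul (m θ : ℝ) :
    HasDerivAt (fun x => cos (m * x)) (-m * sin (m * θ)) θ :=
  ((hasDerivAt_id' θ).const_mul m).cos.congr_deriv (by ring)

theorem hasDerivAt_sin_const_mul (m θ : ℝ) :
    HasDerivAt (fun x => sin (m * x)) (m * cos (m * θ)) θ :=
  ((hasDerivAt_id' θ).const_mul m).sin.congr_deriv (by ring)

theorem periodic_of_deriv_deriv_eq {m : ℕ} (hm : m ≠ 0) {y : ℝ → ℝ} (hy : Differentiable ℝ y)
    (hy' : Differentiable ℝ y⁽¹⁾) (h : ∀ t, y⁽²⁾ t = -(m : ℝ) ^ 2 * y t) :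
    Function.Periodic y (2 * π) := by
  intro t
  have hm' : (m : ℝ) ≠ 0 := Nat.cast_ne_zero.2 hm
  have hcos : cos (m * (t + 2 * π)) = cos (m * t) := by
    rw [mul_add, cos_add_nat_mul_two_pi]
  have hsin : sin (m * (t + 2 * π)) = sin (m * t) := by
    rw [mul_add, sin_add_nat_mul_two_pi]
  have amplitude_cos := eq_of_forall_hasDerivAt_zero
    (φ := fun t => y t * cos (m * t) - y⁽¹⁾ t / m * sin (m * t)) (fun t =>
      (((hy t).hasDerivAt.mul (hasDerivAt_cos_const_mul m t)).sub
        (((hy' t).hasDerivAt.div_const (m : ℝ)).mul (hasDerivAt_sin_const_mul m t))).congr_deriv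
          (by rw [h]; field_simp; ring)) (t + 2 * π) t
  have amplitude_sin := eq_of_forall_hasDerivAt_zero
    (φ := fun t => y t * sin (m * t) + y⁽¹⁾ t / m * cos (m * t)) (fun t =>
      (((hy t).hasDerivAt.mul (hasDerivAt_sin_const_mul m t)).add
        (((hy' t).hasDerivAt.div_const (m : ℝ)).mul (hasDerivAt_cos_const_mul m t))).congr_deriv
          (by rw [h]; field_simp; ring)) (t + 2 * π) t
  simp only [hcos, hsin] at amplitude_cos amplitude_sin
  linear_combination cos (m * t) * amplitude_cos + sin (m * t) * amplitude_sin
    - (y (t + 2 * π) - y t) * sin_sq_add_cos_sq (m * t)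

theorem mem_of_forall_sum_smul_mem {𝕜 E T ι : Type*} [Field 𝕜] [AddCommGroup E] [Module 𝕜 E]
    [Fintype ι] {e : ι → T → 𝕜} (he : LinearIndependent 𝕜 e) (P : Submodule 𝕜 E) {φ : ι → E}
    (h : ∀ t, ∑ i, e i t • φ i ∈ P) (i : ι) : φ i ∈ P := by
  rw [← Submodule.Quotient.mk_eq_zero, ← Module.forall_dual_apply_eq_zero_iff 𝕜]
  intro ℓ
  refine Fintype.linearIndependent_iff.1 he (fun j => ℓ (Submodule.Quotient.mk (φ j))) ?_ i
  ext t
  have := congrArg ℓ ((Submodule.Quotient.mk_eq_zero P).2 (h t))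
  simpa [← Submodule.mkQ_apply, mul_comm] using this

/-- The functions `cos 3θ`, `sin 3θ`, `cos θ`, `sin θ`, `cos 2θ`, `sin 2θ`. -/
noncomputable def harmonics : Fin 6 → ℝ → ℝ :=
  ![fun t => cos (3 * t), fun t => sin (3 * t), cos, sin, fun t => cos (2 * t),
    fun t => sin (2 * t)]

theorem linearIndependent_harmonics : LinearIndependent ℝ harmonics := by
  rw [Fintype.linearIndependent_iff]
  intro c hc
  have eval (t : ℝ) : c 0 * (4 * cos t ^ 3 - 3 * cos t) + c 1 * (3 * sin t - 4 * sin t ^ 3)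
      + c 2 * cos t + c 3 * sin t + c 4 * (2 * cos t ^ 2 - 1) + c 5 * (2 * sin t * cos t) = 0 := by
    simpa [harmonics, Fin.sum_univ_six, cos_three_mul, sin_three_mul, cos_two_mul, sin_two_mul]
      using congrFun hc t
  have sq_sqrt_two : √2 ^ 2 = 2 := sq_sqrt zero_le_two
  have sq_sqrt_three : √3 ^ 2 = 3 := sq_sqrt zero_le_three
  have at_zero : c 0 + c 2 + c 4 = 0 := by
    linear_combination (norm := (simp; ring)) eval 0
  have at_pi : -c 0 - c 2 + c 4 = 0 := by
    linear_combination (norm := (simp; ring)) eval π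
  have at_half_pi : -c 1 + c 3 - c 4 = 0 := by
    linear_combination (norm := (simp; ring)) eval (π / 2)
  have at_third_pi : -c 0 + c 2 / 2 - c 4 / 2 + √3 / 2 * (c 3 + c 5) = 0 := by
    linear_combination (norm := (simp only [cos_pi_div_three, sin_pi_div_three]; ring))
      eval (π / 3) + √3 / 2 * c 1 * sq_sqrt_three
  have at_neg_third_pi : -c 0 + c 2 / 2 - c 4 / 2 - √3 / 2 * (c 3 + c 5) = 0 := by
    linear_combination
      (norm := (simp only [cos_neg, sin_neg, cos_pi_div_three, sin_pi_div_three]; ring))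
      eval (-(π / 3)) - √3 / 2 * c 1 * sq_sqrt_three
  have at_quarter_pi : √2 / 2 * (-c 0 + c 1 + c 2 + c 3) + c 5 = 0 := by
    linear_combination (norm := (simp only [cos_pi_div_four, sin_pi_div_four]; ring))
      eval (π / 4) - (√2 / 2 * (c 0 - c 1) + c 4 / 2 + c 5 / 2) * sq_sqrt_two
  have c₄ : c 4 = 0 := by linarith
  have c₀ : c 0 = 0 := by linarith
  have c₂ : c 2 = 0 := by linarith
  have c₁ : c 1 = c 3 := by linarith
  have c₅ : c 5 = -c 3 := by nlinarith [sqrt_pos.2 (zero_lt_three (α := ℝ))]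
  have c₃ : c 3 = 0 := by
    have : (√2 - 1) * c 3 = 0 := by
      linear_combination at_quarter_pi + √2 / 2 * (c₀ - c₁ - c₂) - c₅
    exact (mul_eq_zero.1 this).resolve_left (sub_pos.2 one_lt_sqrt_two).ne'
  intro i
  fin_cases i <;> simp [*]

theorem eq_zero_of_forall_sum_mul_harmonics {x : Fin 6 → ℝ}
    (h : ∀ t, ∑ i, x i * harmonics i t = 0) : x = 0 :=
  funext <| Fintype.linearIndependent_iff.1 linearIndependent_harmonics x <|
    funext fun t => by simpa using h t

open Polynomial in
theorem eq_zero_of_eval_add_sqrt_mul_eval_eq_zero {a : ℝ} (ha : 0 < a) {P Q : ℝ[X]}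
    (h : ∀ r : ℝ, 0 < r → P.eval r + √(1 + a * r ^ 2) * Q.eval r = 0) : P = 0 := by
  have sq_eq : P ^ 2 = (1 + C a * X ^ 2) * Q ^ 2 := by
    refine eq_of_infinite_eval_eq _ _ ((Ioi_infinite (0 : ℝ)).mono fun r hr => ?_)
    have hs : √(1 + a * r ^ 2) ^ 2 = 1 + a * r ^ 2 := sq_sqrt (by positivity)
    simp only [mem_ofPred_eq, eval_pow, eval_mul, eval_add, eval_one, eval_C, eval_X]
    linear_combination (P.eval r - √(1 + a * r ^ 2) * Q.eval r) * h r hr + Q.eval r ^ 2 * hs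
  by_contra hP
  have hQ : Q ≠ 0 := by rintro rfl; simp_all
  obtain ⟨q, rfl⟩ : Q ∣ P :=
    (IsIntegrallyClosed.pow_dvd_pow_iff two_ne_zero).1 ⟨_, sq_eq.trans (mul_comm _ _)⟩
  have hq : q ^ 2 = 1 + C a * X ^ 2 :=
    mul_right_cancel₀ (pow_ne_zero 2 hQ) (by rw [← sq_eq]; ring)
  have hdeg : q.degree = 1 := by
    have h2 : (q ^ 2).natDegree = 2 := by rw [hq]; compute_degree!; exact ha.ne'
    rw [natDegree_pow] at h2
    exact (degree_eq_iff_natDegree_eq_of_pos one_pos).2 (by lia)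
  obtain ⟨x, hx⟩ := exists_root_of_degree_eq_one hdeg
  have : 0 = 1 + a * x ^ 2 := by simpa [hx.eq_zero] using congrArg (eval x) hq
  nlinarith [mul_nonneg ha.le (sq_nonneg x)]

theorem hasDerivAt_deriv {φ : ℝ → ℝ} (h : ContDiff ℝ ∞ φ) (t : ℝ) : HasDerivAt φ (φ⁽¹⁾ t) t :=
  (h.differentiable (by simp) t).hasDerivAt

theorem contDiff_deriv {φ : ℝ → ℝ} (h : ContDiff ℝ ∞ φ) : ContDiff ℝ ∞ φ⁽¹⁾ :=
  (contDiff_infty_iff_deriv.1 h).2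

theorem contDiffOn_slice_left {G : ℝ → ℝ → ℝ} {s : Set ℝ}
    (hG : ContDiffOn ℝ ∞ (Function.uncurry G) (s ×ˢ univ)) (t : ℝ) :
    ContDiffOn ℝ ∞ (fun r => G r t) s :=
  hG.comp (contDiffOn_id.prodMk contDiffOn_const) fun _ hr => ⟨hr, trivial⟩

theorem contDiff_slice_right {G : ℝ → ℝ → ℝ} {s : Set ℝ}
    (hG : ContDiffOn ℝ ∞ (Function.uncurry G) (s ×ˢ univ)) {r : ℝ} (hr : r ∈ s) :
    ContDiff ℝ ∞ (G r) :=
  contDiffOn_univ.1 <| hG.comp (contDiffOn_const.prodMk contDiffOn_id) fun _ _ => ⟨hr, trivial⟩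

/-- The ten leading coefficients of a third order integral of motion. -/
structure LeadingCoeffs where
  (A₁ A₂ A₃ A₄ B₀ B₁ B₂ C₁ C₂ D₀ : ℝ)

namespace LeadingCoeffs

noncomputable section

variable (K : LeadingCoeffs)

/-- The cubic angular coefficient `F₁`; its derivatives carry the dependence of `F₂`, `F₃`, `F₄`
on `A₁, A₂, A₃, A₄`. -/
def f (θ : ℝ) : ℝ := K.A₁ * cos (3 * θ) + K.A₂ * sin (3 * θ) + K.A₃ * cos θ + K.A₄ * sin θ

/-- The part of `F₂` that is independent of `r`. -/
def b (θ : ℝ) : ℝ := K.B₁ * cos (2 * θ) + K.B₂ * sin (2 * θ) + K.B₀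

/-- The part of `F₃` that is independent of `r`. -/
def c (θ : ℝ) : ℝ := K.C₁ * cos θ + K.C₂ * sin θ

theorem contDiff_f : ContDiff ℝ ∞ K.f := by unfold f; fun_prop

theorem contDiff_b : ContDiff ℝ ∞ K.b := by unfold b; fun_prop

theorem contDiff_c : ContDiff ℝ ∞ K.c := by unfold c; fun_prop

theorem deriv_f : K.f⁽¹⁾ = fun θ =>
    -3 * K.A₁ * sin (3 * θ) + 3 * K.A₂ * cos (3 * θ) - K.A₃ * sin θ + K.A₄ * cos θ :=
  deriv_eq fun θ => (((((hasDerivAt_cos_const_mul 3 θ).const_mul K.A₁).add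
    ((hasDerivAt_sin_const_mul 3 θ).const_mul K.A₂)).add ((hasDerivAt_cos θ).const_mul K.A₃)).add
    ((hasDerivAt_sin θ).const_mul K.A₄)).congr_deriv (by ring)

theorem deriv_deriv_f : K.f⁽²⁾ = fun θ =>
    -9 * K.A₁ * cos (3 * θ) - 9 * K.A₂ * sin (3 * θ) - K.A₃ * cos θ - K.A₄ * sin θ := by
  rw [deriv_f]
  exact deriv_eq fun θ => (((((hasDerivAt_sin_const_mul 3 θ).const_mul (-3 * K.A₁)).add
    ((hasDerivAt_cos_const_mul 3 θ).const_mul (3 * K.A₂))).sub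
    ((hasDerivAt_sin θ).const_mul K.A₃)).add
    ((hasDerivAt_cos θ).const_mul K.A₄)).congr_deriv (by ring)

theorem deriv_deriv_deriv_f : K.f⁽³⁾ = fun θ =>
    27 * K.A₁ * sin (3 * θ) - 27 * K.A₂ * cos (3 * θ) + K.A₃ * sin θ - K.A₄ * cos θ := by
  rw [deriv_deriv_f]
  exact deriv_eq fun θ => (((((hasDerivAt_cos_const_mul 3 θ).const_mul (-9 * K.A₁)).sub
    ((hasDerivAt_sin_const_mul 3 θ).const_mul (9 * K.A₂))).sub
    ((hasDerivAt_cos θ).const_mul K.A₃)).sub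
    ((hasDerivAt_sin θ).const_mul K.A₄)).congr_deriv (by ring)

theorem deriv_b : K.b⁽¹⁾ = fun θ => -2 * K.B₁ * sin (2 * θ) + 2 * K.B₂ * cos (2 * θ) :=
  deriv_eq fun θ => ((((hasDerivAt_cos_const_mul 2 θ).const_mul K.B₁).add
    ((hasDerivAt_sin_const_mul 2 θ).const_mul K.B₂)).add_const K.B₀).congr_deriv (by ring)

theorem deriv_deriv_b (θ : ℝ) : K.b⁽²⁾ θ = -4 * (K.b θ - K.B₀) := by
  rw [deriv_b, b]
  exact ((((hasDerivAt_sin_const_mul 2 θ).const_mul (-2 * K.B₁)).add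
    ((hasDerivAt_cos_const_mul 2 θ).const_mul (2 * K.B₂))).congr_deriv (by ring)).deriv

theorem deriv_c : K.c⁽¹⁾ = fun θ => -K.C₁ * sin θ + K.C₂ * cos θ :=
  deriv_eq fun θ => (((hasDerivAt_cos θ).const_mul K.C₁).add
    ((hasDerivAt_sin θ).const_mul K.C₂)).congr_deriv (by ring)

theorem F₁_eq (θ : ℝ) : F₁ K.A₁ K.A₂ K.A₃ K.A₄ θ = K.f θ := rfl

theorem F₂_eq (r θ : ℝ) : F₂ K.A₁ K.A₂ K.A₃ K.A₄ K.B₀ K.B₁ K.B₂ r θ = K.f⁽¹⁾ θ / r + K.b θ := by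
  simp only [F₂, deriv_f, b]; ring

theorem F₃_eq (r θ : ℝ) : F₃ K.A₁ K.A₂ K.A₃ K.A₄ K.B₁ K.B₂ K.C₁ K.C₂ r θ =
    (K.f⁽²⁾ θ + 3 * K.f θ) / 2 / r ^ 2 + K.b⁽¹⁾ θ / r + K.c θ := by
  simp only [F₃, deriv_deriv_f, f, deriv_b, c]; ring

theorem F₄_eq (r θ : ℝ) : F₄ K.A₁ K.A₂ K.A₃ K.A₄ K.B₀ K.B₁ K.B₂ K.C₁ K.C₂ K.D₀ r θ =
    (K.f⁽³⁾ θ + 7 * K.f⁽¹⁾ θ) / 6 / r ^ 3 + (2 * K.B₀ - K.b θ) / r ^ 2 + K.c⁽¹⁾ θ / r + K.D₀ := by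
  rw [F₄, deriv_deriv_deriv_f, deriv_f, deriv_c, b]; ring

end

end LeadingCoeffs

/-- The hypotheses on `R`, `S`, `G₁`, `G₂`: smoothness and the determining equations (E1)–(E4) for
the potential `V(r,θ) = R(r) + S(θ)/r²`. -/
structure DeterminingEquations (K : LeadingCoeffs) (ℏ : ℝ) (R S : ℝ → ℝ) (G₁ G₂ : ℝ → ℝ → ℝ) :
    Prop where
  contDiffOn_R : ContDiffOn ℝ ∞ R (Ioi 0)
  contDiff_S : ContDiff ℝ ∞ S
  contDiffOn_G₁ : ContDiffOn ℝ ∞ (Function.uncurry G₁) (Ioi 0 ×ˢ univ)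
  contDiffOn_G₂ : ContDiffOn ℝ ∞ (Function.uncurry G₂) (Ioi 0 ×ˢ univ)
  E1 : ∀ r ∈ Ioi (0 : ℝ), ∀ θ : ℝ,
    G₁ r θ * (deriv R r - 2 * S θ / r ^ 3) + G₂ r θ * (deriv S θ / r ^ 2)
      = ℏ ^ 2 / 4 *
        (F₁ K.A₁ K.A₂ K.A₃ K.A₄ θ * (iteratedDeriv 3 R r - 24 * S θ / r ^ 5)
          + F₂ K.A₁ K.A₂ K.A₃ K.A₄ K.B₀ K.B₁ K.B₂ r θ * (6 * deriv S θ / r ^ 4)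
          + F₃ K.A₁ K.A₂ K.A₃ K.A₄ K.B₁ K.B₂ K.C₁ K.C₂ r θ * (-2 * iteratedDeriv 2 S θ / r ^ 3)
          + F₄ K.A₁ K.A₂ K.A₃ K.A₄ K.B₀ K.B₁ K.B₂ K.C₁ K.C₂ K.D₀ r θ
              * (iteratedDeriv 3 S θ / r ^ 2)
          + r * F₃ K.A₁ K.A₂ K.A₃ K.A₄ K.B₁ K.B₂ K.C₁ K.C₂ r θ
              * (iteratedDeriv 2 R r + 6 * S θ / r ^ 4)
          + (3 * r * F₄ K.A₁ K.A₂ K.A₃ K.A₄ K.B₀ K.B₁ K.B₂ K.C₁ K.C₂ K.D₀ r θ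
              - (2 / r) * F₂ K.A₁ K.A₂ K.A₃ K.A₄ K.B₀ K.B₁ K.B₂ r θ) * (-2 * deriv S θ / r ^ 3)
          - (2 / r) * F₃ K.A₁ K.A₂ K.A₃ K.A₄ K.B₁ K.B₂ K.C₁ K.C₂ r θ
              * (iteratedDeriv 2 S θ / r ^ 2)
          + (-F₃ K.A₁ K.A₂ K.A₃ K.A₄ K.B₁ K.B₂ K.C₁ K.C₂ r θ
              + 2 * K.C₁ * cos θ + 2 * K.C₂ * sin θ) * (deriv R r - 2 * S θ / r ^ 3)
          + (-2 * F₄ K.A₁ K.A₂ K.A₃ K.A₄ K.B₀ K.B₁ K.B₂ K.C₁ K.C₂ K.D₀ r θ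
              + (2 / r ^ 2) * F₂ K.A₁ K.A₂ K.A₃ K.A₄ K.B₀ K.B₁ K.B₂ r θ + 8 * K.D₀
              + (-2 * K.C₁ * sin θ + 2 * K.C₂ * cos θ) / r) * (deriv S θ / r ^ 2))
  E2 : ∀ r ∈ Ioi (0 : ℝ), ∀ θ : ℝ,
    deriv (fun r' => G₁ r' θ) r
      = 3 * F₁ K.A₁ K.A₂ K.A₃ K.A₄ θ * (deriv R r - 2 * S θ / r ^ 3)
        + F₂ K.A₁ K.A₂ K.A₃ K.A₄ K.B₀ K.B₁ K.B₂ r θ * (deriv S θ / r ^ 2)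
  E3 : ∀ r ∈ Ioi (0 : ℝ), ∀ θ : ℝ,
    (1 / r ^ 2) * deriv (fun θ' => G₂ r θ') θ
      = F₃ K.A₁ K.A₂ K.A₃ K.A₄ K.B₁ K.B₂ K.C₁ K.C₂ r θ * (deriv R r - 2 * S θ / r ^ 3)
        + 3 * F₄ K.A₁ K.A₂ K.A₃ K.A₄ K.B₀ K.B₁ K.B₂ K.C₁ K.C₂ K.D₀ r θ * (deriv S θ / r ^ 2)
        - G₁ r θ / r ^ 3
  E4 : ∀ r ∈ Ioi (0 : ℝ), ∀ θ : ℝ,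
    deriv (fun r' => G₂ r' θ) r
      = 2 * (F₂ K.A₁ K.A₂ K.A₃ K.A₄ K.B₀ K.B₁ K.B₂ r θ * (deriv R r - 2 * S θ / r ^ 3)
          + F₃ K.A₁ K.A₂ K.A₃ K.A₄ K.B₁ K.B₂ K.C₁ K.C₂ r θ * (deriv S θ / r ^ 2))
        - (1 / r ^ 2) * deriv (fun θ' => G₁ r θ') θ

namespace LeadingCoeffs

noncomputable section

variable (K : LeadingCoeffs) (H : ℝ) (S g g₂ : ℝ → ℝ) (t : ℝ)

/-- The coefficient of `1/r` in the integrated (E3). -/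
def ℓ₁ : ℝ := g⁽²⁾ t + g t - 2 * K.c t * S⁽²⁾ t - 5 * K.c⁽¹⁾ t * S⁽¹⁾ t + 2 * K.c t * S t

/-- The coefficient of `1/r²` in the integrated (E3). -/
def ℓ₂ : ℝ :=
  -(1 / 2) * (K.b t * S⁽³⁾ t + 4 * K.b⁽¹⁾ t * S⁽²⁾ t + (24 * K.B₀ - 20 * K.b t) * S⁽¹⁾ t
    - 8 * K.b⁽¹⁾ t * S t)

/-- The coefficient of `1/r³` in the integrated (E3). -/
def ℓ₃ : ℝ :=
  -(1 / 6) * (K.f⁽¹⁾ t * S⁽³⁾ t + 4 * K.f⁽²⁾ t * S⁽²⁾ t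
    + (6 * K.f⁽³⁾ t + 10 * K.f⁽¹⁾ t) * S⁽¹⁾ t - (20 * K.f⁽²⁾ t + 36 * K.f t) * S t)

/-- The coefficient of `1/r²` in the integrated (E1). -/
def n₂ : ℝ := S⁽¹⁾ t * g₂ t - H * K.D₀ * S⁽³⁾ t

/-- The coefficient of `1/r³` in the integrated (E1). -/
def n₃ : ℝ :=
  -2 * S t * g t - 2 * K.c t * S⁽¹⁾ t ^ 2 + S⁽¹⁾ t * g⁽¹⁾ t
    - H * (K.c⁽¹⁾ t * S⁽³⁾ t - 4 * K.c t * S⁽²⁾ t - 6 * K.c⁽¹⁾ t * S⁽¹⁾ t + 4 * K.c t * S t)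

/-- The coefficient of `1/r⁴` in the integrated (E1). -/
def n₄ : ℝ :=
  2 * K.b t * S t * S⁽¹⁾ t
    - 1 / 2 * S⁽¹⁾ t * (-4 * K.b t * S t + 3 * K.b⁽¹⁾ t * S⁽¹⁾ t + K.b t * S⁽²⁾ t)
    - H * ((2 * K.B₀ - K.b t) * S⁽³⁾ t - 4 * K.b⁽¹⁾ t * S⁽²⁾ t
      + (20 * K.b t - 16 * K.B₀) * S⁽¹⁾ t + 8 * K.b⁽¹⁾ t * S t)

/-- The coefficient of `1/r⁵` in the integrated (E1). -/
def n₅ : ℝ :=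
  -2 * S t * (3 * K.f t * S t - 1 / 2 * K.f⁽¹⁾ t * S⁽¹⁾ t)
    - 1 / 3 * S⁽¹⁾ t * (-7 * K.f⁽¹⁾ t * S t + 3 / 2 * K.f⁽²⁾ t * S⁽¹⁾ t
      + 1 / 2 * K.f⁽¹⁾ t * S⁽²⁾ t)
    - H * ((K.f⁽³⁾ t + 7 * K.f⁽¹⁾ t) / 6 * S⁽³⁾ t - 2 * (K.f⁽²⁾ t + 3 * K.f t) * S⁽²⁾ t
      + (8 / 3 * K.f⁽¹⁾ t - 4 / 3 * K.f⁽³⁾ t) * S⁽¹⁾ t + (4 * K.f⁽²⁾ t - 12 * K.f t) * S t)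

/-- The general solution of (E2), with integration constant `g`. -/
def integralG₁ (R : ℝ → ℝ) (r : ℝ) : ℝ :=
  3 * K.f t * R r + g t + (3 * K.f t * S t - K.f⁽¹⁾ t * S⁽¹⁾ t / 2) / r ^ 2
    - K.b t * S⁽¹⁾ t / r ^ 1

/-- The general solution of (E4) for `G₁ = integralG₁`, with integration constant `g₂` and an
antiderivative `Q` of `R/r²`. -/
def integralG₂ (R Q : ℝ → ℝ) (r : ℝ) : ℝ :=
  2 * K.b t * R r + 2 * K.f⁽¹⁾ t * (R r / r) - K.f⁽¹⁾ t * Q r + g₂ t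
    - (2 * K.c t * S⁽¹⁾ t - g⁽¹⁾ t) / r ^ 1
    - 1 / 2 * (-4 * K.b t * S t + 3 * K.b⁽¹⁾ t * S⁽¹⁾ t + K.b t * S⁽²⁾ t) / r ^ 2
    - 1 / 3 * (-7 * K.f⁽¹⁾ t * S t + 3 / 2 * K.f⁽²⁾ t * S⁽¹⁾ t + 1 / 2 * K.f⁽¹⁾ t * S⁽²⁾ t) / r ^ 3

end

end LeadingCoeffs

/-- The determining equations after integrating (E2) and (E4) in `r`. Here `Q` is an antiderivative
of `R/r²`, the functions `g` and `g₂` are the integration constants of `G₁` and `G₂`, and `H`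
stands for `ℏ²/4`; (E3) becomes `linear` and (E1) becomes `quadratic`. -/
structure IntegratedEquations (K : LeadingCoeffs) (H : ℝ) (R Q S g g₂ : ℝ → ℝ) : Prop where
  contDiffOn_R : ContDiffOn ℝ ∞ R (Ioi 0)
  contDiff_S : ContDiff ℝ ∞ S
  contDiff_g : ContDiff ℝ ∞ g
  hasDerivAt_Q : ∀ r, 0 < r → HasDerivAt Q (R r / r ^ 2) r
  linear : ∀ r, 0 < r → ∀ t,
    ((K.f⁽²⁾ t + 3 * K.f t) / 2 + K.b⁽¹⁾ t * r + K.c t * r ^ 2) * R⁽¹⁾ r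
        - (3 * K.f t + 2 * K.f⁽²⁾ t) * R r / r - 2 * K.b⁽¹⁾ t * R r + K.f⁽²⁾ t * Q r
      = g₂⁽¹⁾ t - 3 * K.D₀ * S⁽¹⁾ t + K.ℓ₁ S g t / r + K.ℓ₂ S t / r ^ 2 + K.ℓ₃ S t / r ^ 3
  quadratic : ∀ r, 0 < r → ∀ t,
    3 * K.f t * R r * R⁽¹⁾ r
        + (g t - K.b t * S⁽¹⁾ t / r
          + (3 * K.f t * S t - K.f⁽¹⁾ t * S⁽¹⁾ t / 2) / r ^ 2) * R⁽¹⁾ r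
        - 6 * K.f t * S t * R r / r ^ 3
        + S⁽¹⁾ t * (2 * K.b t * R r + 2 * K.f⁽¹⁾ t * R r / r - K.f⁽¹⁾ t * Q r) / r ^ 2
        + K.n₂ H S g₂ t / r ^ 2 + K.n₃ H S g t / r ^ 3 + K.n₄ H S t / r ^ 4 + K.n₅ H S t / r ^ 5
      = H * (K.f t * R⁽³⁾ r
        + ((K.f⁽²⁾ t + 3 * K.f t) / 2 / r + K.b⁽¹⁾ t + K.c t * r) * R⁽²⁾ r
        - ((K.f⁽²⁾ t + 3 * K.f t) / 2 / r ^ 2 + K.b⁽¹⁾ t / r - K.c t) * R⁽¹⁾ r)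

namespace DeterminingEquations

variable {K : LeadingCoeffs} {ℏ : ℝ} {R S : ℝ → ℝ} {G₁ G₂ : ℝ → ℝ → ℝ}

theorem hasDerivAt_R (h : DeterminingEquations K ℏ R S G₁ G₂) {r : ℝ} (hr : 0 < r) :
    HasDerivAt R (R⁽¹⁾ r) r :=
  (h.contDiffOn_R.differentiableOn (by simp)).hasDerivAt (Ioi_mem_nhds hr)

theorem exists_G₁_eq (h : DeterminingEquations K ℏ R S G₁ G₂) :
    ∃ g : ℝ → ℝ, ContDiff ℝ ∞ g ∧ ∀ r, 0 < r → ∀ t, G₁ r t = K.integralG₁ S g t R r := by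
  have integral (t : ℝ) : ∃ k, ∀ r, 0 < r → G₁ r t = K.integralG₁ S 0 t R r + k := by
    refine exists_eq_add_const_of_hasDerivAt (fun r hr =>
      ((contDiffOn_slice_left h.contDiffOn_G₁ t).differentiableOn (by simp)).hasDerivAt
        (Ioi_mem_nhds hr)) fun r hr =>
      ((((h.hasDerivAt_R hr).const_mul (3 * K.f t)).add_const 0).add (hasDerivAt_const_div_pow
        (3 * K.f t * S t - K.f⁽¹⁾ t * S⁽¹⁾ t / 2) 2 hr.ne')).sub
        (hasDerivAt_const_div_pow (K.b t * S⁽¹⁾ t) 1 hr.ne') |>.congr_deriv ?_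
    rw [h.E2 r hr t, K.F₂_eq, K.F₁_eq]
    field_simp
    ring
  choose g hg using integral
  refine ⟨g, ?_, fun r hr t => by
    rw [hg t r hr, LeadingCoeffs.integralG₁, LeadingCoeffs.integralG₁, Pi.zero_apply]; ring⟩
  have g_eq : g = fun t => G₁ 1 t - K.integralG₁ S 0 t R 1 :=
    funext fun t => by rw [hg t 1 one_pos]; ring
  have := contDiff_slice_right h.contDiffOn_G₁ (mem_Ioi.2 one_pos)
  have := h.contDiff_S
  have := contDiff_deriv h.contDiff_S
  have := K.contDiff_f
  have := contDiff_deriv K.contDiff_f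
  have := K.contDiff_b
  simp only [g_eq, LeadingCoeffs.integralG₁, Pi.zero_apply]
  fun_prop

theorem exists_hasDerivAt_div_sq (h : DeterminingEquations K ℏ R S G₁ G₂) :
    ∃ Q : ℝ → ℝ, ∀ r, 0 < r → HasDerivAt Q (R r / r ^ 2) r := by
  refine ⟨fun r => ∫ x in (1 : ℝ)..r, R x / x ^ 2, fun r hr => ?_⟩
  have hc : ContinuousOn (fun x => R x / x ^ 2) (Ioi 0) :=
    h.contDiffOn_R.continuousOn.div (by fun_prop) fun x hx => pow_ne_zero 2 (ne_of_gt hx)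
  refine intervalIntegral.integral_hasDerivAt_right
    (hc.mono fun x hx => (lt_min one_pos hr).trans_le hx.1).intervalIntegrable
    (hc.stronglyMeasurableAtFilter isOpen_Ioi r hr) (hc.continuousAt (isOpen_Ioi.mem_nhds hr))

theorem hasDerivAt_integralG₁ (h : DeterminingEquations K ℏ R S G₁ G₂) {g : ℝ → ℝ}
    (hg : ContDiff ℝ ∞ g) (r t : ℝ) :
    HasDerivAt (fun t => K.integralG₁ S g t R r)
      (3 * K.f⁽¹⁾ t * R r + g⁽¹⁾ t
        + (3 * K.f⁽¹⁾ t * S t + 3 * K.f t * S⁽¹⁾ t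
          - (K.f⁽²⁾ t * S⁽¹⁾ t + K.f⁽¹⁾ t * S⁽²⁾ t) / 2) / r ^ 2
        - (K.b⁽¹⁾ t * S⁽¹⁾ t + K.b t * S⁽²⁾ t) / r ^ 1) t := by
  have hf := hasDerivAt_deriv K.contDiff_f t
  have hf' := hasDerivAt_deriv (contDiff_deriv K.contDiff_f) t
  have hb := hasDerivAt_deriv K.contDiff_b t
  have hS := hasDerivAt_deriv h.contDiff_S t
  have hS' := hasDerivAt_deriv (contDiff_deriv h.contDiff_S) t
  exact (((((hf.const_mul 3).mul_const (R r)).add (hasDerivAt_deriv hg t)).add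
    ((((hf.const_mul 3).mul hS).sub ((hf'.mul hS').div_const 2)).div_const (r ^ 2))).sub
    ((hb.mul hS').div_const (r ^ 1))).congr_deriv (by ring)

theorem exists_G₂_eq (h : DeterminingEquations K ℏ R S G₁ G₂) {g Q : ℝ → ℝ}
    (hg : ContDiff ℝ ∞ g) (hG₁ : ∀ r, 0 < r → ∀ t, G₁ r t = K.integralG₁ S g t R r)
    (hQ : ∀ r, 0 < r → HasDerivAt Q (R r / r ^ 2) r) :
    ∃ g₂ : ℝ → ℝ, Differentiable ℝ g₂ ∧
      ∀ r, 0 < r → ∀ t, G₂ r t = K.integralG₂ S g g₂ t R Q r := by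
  have integral (t : ℝ) : ∃ k, ∀ r, 0 < r → G₂ r t = K.integralG₂ S g 0 t R Q r + k := by
    refine exists_eq_add_const_of_hasDerivAt (fun r hr =>
      ((contDiffOn_slice_left h.contDiffOn_G₂ t).differentiableOn (by simp)).hasDerivAt
        (Ioi_mem_nhds hr)) fun r hr =>
      ((((((((h.hasDerivAt_R hr).const_mul (2 * K.b t)).add
        (((h.hasDerivAt_R hr).div (hasDerivAt_id r) hr.ne').const_mul (2 * K.f⁽¹⁾ t))).sub
        ((hQ r hr).const_mul (K.f⁽¹⁾ t))).add_const 0).sub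
        (hasDerivAt_const_div_pow (2 * K.c t * S⁽¹⁾ t - g⁽¹⁾ t) 1 hr.ne')).sub
        (hasDerivAt_const_div_pow _ 2 hr.ne')).sub
        (hasDerivAt_const_div_pow _ 3 hr.ne')) |>.congr_deriv ?_
    have hG₁t : deriv (fun t => G₁ r t) t = _ :=
      (congrArg (deriv · t) (funext (hG₁ r hr))).trans (h.hasDerivAt_integralG₁ hg r t).deriv
    rw [h.E4 r hr t, K.F₂_eq, K.F₃_eq, hG₁t]
    simp only [id]
    field_simp
    ring
  choose g₂ hg₂ using integral
  refine ⟨g₂, ?_, fun r hr t => by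
    rw [hg₂ t r hr, LeadingCoeffs.integralG₂, LeadingCoeffs.integralG₂, Pi.zero_apply]; ring⟩
  have g₂_eq : g₂ = fun t => G₂ 1 t - K.integralG₂ S g 0 t R Q 1 :=
    funext fun t => by rw [hg₂ t 1 one_pos]; ring
  have hf' := contDiff_deriv K.contDiff_f
  have hS' := contDiff_deriv h.contDiff_S
  have := (contDiff_slice_right h.contDiffOn_G₂ (mem_Ioi.2 one_pos)).differentiable (by simp)
  have := h.contDiff_S.differentiable (by simp)
  have := hS'.differentiable (by simp)
  have := (contDiff_deriv hS').differentiable (by simp)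
  have := hf'.differentiable (by simp)
  have := (contDiff_deriv hf').differentiable (by simp)
  have := K.contDiff_b.differentiable (by simp)
  have := (contDiff_deriv K.contDiff_b).differentiable (by simp)
  have := K.contDiff_c.differentiable (by simp)
  have := (contDiff_deriv hg).differentiable (by simp)
  simp only [g₂_eq, LeadingCoeffs.integralG₂, Pi.zero_apply]
  fun_prop

theorem hasDerivAt_integralG₂ (h : DeterminingEquations K ℏ R S G₁ G₂) {g g₂ : ℝ → ℝ}
    (hg : ContDiff ℝ ∞ g) (hg₂ : Differentiable ℝ g₂) (Q : ℝ → ℝ) (r t : ℝ) :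
    HasDerivAt (fun t => K.integralG₂ S g g₂ t R Q r)
      (2 * K.b⁽¹⁾ t * R r + 2 * K.f⁽²⁾ t * (R r / r) - K.f⁽²⁾ t * Q r + g₂⁽¹⁾ t
        - (2 * K.c⁽¹⁾ t * S⁽¹⁾ t + 2 * K.c t * S⁽²⁾ t - g⁽²⁾ t) / r ^ 1
        - 1 / 2 * (-4 * K.b⁽¹⁾ t * S t - 4 * K.b t * S⁽¹⁾ t
          - 12 * (K.b t - K.B₀) * S⁽¹⁾ t + 4 * K.b⁽¹⁾ t * S⁽²⁾ t + K.b t * S⁽³⁾ t) / r ^ 2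
        - 1 / 3 * (-7 * K.f⁽²⁾ t * S t - 7 * K.f⁽¹⁾ t * S⁽¹⁾ t + 3 / 2 * K.f⁽³⁾ t * S⁽¹⁾ t
          + 2 * K.f⁽²⁾ t * S⁽²⁾ t + 1 / 2 * K.f⁽¹⁾ t * S⁽³⁾ t) / r ^ 3) t := by
  have hf' := hasDerivAt_deriv (contDiff_deriv K.contDiff_f) t
  have hf'' := hasDerivAt_deriv (contDiff_deriv (contDiff_deriv K.contDiff_f)) t
  have hb := hasDerivAt_deriv K.contDiff_b t
  have hb' := (hasDerivAt_deriv (contDiff_deriv K.contDiff_b) t).congr_deriv (K.deriv_deriv_b t)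
  have hc := hasDerivAt_deriv K.contDiff_c t
  have hS := hasDerivAt_deriv h.contDiff_S t
  have hS' := hasDerivAt_deriv (contDiff_deriv h.contDiff_S) t
  have hS'' := hasDerivAt_deriv (contDiff_deriv (contDiff_deriv h.contDiff_S)) t
  have hg' := hasDerivAt_deriv (contDiff_deriv hg) t
  exact (((((((hb.const_mul 2).mul_const (R r)).add
    ((hf'.const_mul 2).mul_const (R r / r))).sub (hf'.mul_const (Q r))).add
    (hg₂ t).hasDerivAt).sub ((((hc.const_mul 2).mul hS').sub hg').div_const (r ^ 1))).sub
    ((((((hb.const_mul (-4)).mul hS).add ((hb'.const_mul 3).mul hS')).add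
      (hb.mul hS'')).const_mul (1 / 2)).div_const (r ^ 2))).sub
    ((((((hf'.const_mul (-7)).mul hS).add ((hf''.const_mul (3 / 2)).mul hS')).add
      ((hf'.const_mul (1 / 2)).mul hS'')).const_mul (1 / 3)).div_const (r ^ 3))
    |>.congr_deriv (by ring)

theorem integrated_E3 (h : DeterminingEquations K ℏ R S G₁ G₂) {g g₂ Q : ℝ → ℝ}
    (hg : ContDiff ℝ ∞ g) (hg₂ : Differentiable ℝ g₂)
    (hG₁ : ∀ r, 0 < r → ∀ t, G₁ r t = K.integralG₁ S g t R r)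
    (hG₂ : ∀ r, 0 < r → ∀ t, G₂ r t = K.integralG₂ S g g₂ t R Q r)
    {r : ℝ} (hr : 0 < r) (t : ℝ) :
    ((K.f⁽²⁾ t + 3 * K.f t) / 2 + K.b⁽¹⁾ t * r + K.c t * r ^ 2) * R⁽¹⁾ r
        - (3 * K.f t + 2 * K.f⁽²⁾ t) * R r / r - 2 * K.b⁽¹⁾ t * R r + K.f⁽²⁾ t * Q r
      = g₂⁽¹⁾ t - 3 * K.D₀ * S⁽¹⁾ t + K.ℓ₁ S g t / r + K.ℓ₂ S t / r ^ 2 + K.ℓ₃ S t / r ^ 3 := by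
  have hG₂t : deriv (fun t => G₂ r t) t = _ :=
    (congrArg (deriv · t) (funext (hG₂ r hr))).trans (h.hasDerivAt_integralG₂ hg hg₂ Q r t).deriv
  have E3 := h.E3 r hr t
  rw [hG₂t, K.F₃_eq, K.F₄_eq, hG₁ r hr t, LeadingCoeffs.integralG₁] at E3
  rw [LeadingCoeffs.ℓ₁, LeadingCoeffs.ℓ₂, LeadingCoeffs.ℓ₃]
  field_simp at E3 ⊢
  linear_combination -(1 / 3) * E3

theorem integrated_E1 (h : DeterminingEquations K ℏ R S G₁ G₂) {g g₂ Q : ℝ → ℝ}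
    (hG₁ : ∀ r, 0 < r → ∀ t, G₁ r t = K.integralG₁ S g t R r)
    (hG₂ : ∀ r, 0 < r → ∀ t, G₂ r t = K.integralG₂ S g g₂ t R Q r)
    {r : ℝ} (hr : 0 < r) (t : ℝ) :
    3 * K.f t * R r * R⁽¹⁾ r
        + (g t - K.b t * S⁽¹⁾ t / r
          + (3 * K.f t * S t - K.f⁽¹⁾ t * S⁽¹⁾ t / 2) / r ^ 2) * R⁽¹⁾ r
        - 6 * K.f t * S t * R r / r ^ 3
        + S⁽¹⁾ t * (2 * K.b t * R r + 2 * K.f⁽¹⁾ t * R r / r - K.f⁽¹⁾ t * Q r) / r ^ 2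
        + K.n₂ (ℏ ^ 2 / 4) S g₂ t / r ^ 2 + K.n₃ (ℏ ^ 2 / 4) S g t / r ^ 3
        + K.n₄ (ℏ ^ 2 / 4) S t / r ^ 4 + K.n₅ (ℏ ^ 2 / 4) S t / r ^ 5
      = ℏ ^ 2 / 4 * (K.f t * R⁽³⁾ r
        + ((K.f⁽²⁾ t + 3 * K.f t) / 2 / r + K.b⁽¹⁾ t + K.c t * r) * R⁽²⁾ r
        - ((K.f⁽²⁾ t + 3 * K.f t) / 2 / r ^ 2 + K.b⁽¹⁾ t / r - K.c t) * R⁽¹⁾ r) := by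
  have E1 := h.E1 r hr t
  have hc : 2 * K.C₂ * sin t = 2 * K.c t - 2 * K.C₁ * cos t := by rw [LeadingCoeffs.c]; ring
  have hc' : 2 * K.C₂ * cos t = 2 * K.c⁽¹⁾ t + 2 * K.C₁ * sin t := by rw [K.deriv_c]; ring
  simp only [iteratedDeriv_succ, iteratedDeriv_zero, K.F₁_eq, K.F₂_eq, K.F₃_eq, K.F₄_eq, hc, hc',
    hG₁ r hr t, hG₂ r hr t, LeadingCoeffs.integralG₁, LeadingCoeffs.integralG₂] at E1
  rw [LeadingCoeffs.n₂, LeadingCoeffs.n₃, LeadingCoeffs.n₄, LeadingCoeffs.n₅]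
  field_simp at E1 ⊢
  linear_combination E1

theorem exists_integratedEquations (h : DeterminingEquations K ℏ R S G₁ G₂) :
    ∃ Q g g₂, IntegratedEquations K (ℏ ^ 2 / 4) R Q S g g₂ := by
  obtain ⟨g, hg, hG₁⟩ := h.exists_G₁_eq
  obtain ⟨Q, hQ⟩ := h.exists_hasDerivAt_div_sq
  obtain ⟨g₂, hg₂, hG₂⟩ := h.exists_G₂_eq hg hG₁ hQ
  exact ⟨Q, g, g₂, h.contDiffOn_R, h.contDiff_S, hg, hQ,
    fun r hr t => h.integrated_E3 hg hg₂ hG₁ hG₂ hr t,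
    fun r hr t => h.integrated_E1 hG₁ hG₂ hr t⟩

end DeterminingEquations

theorem exists_eq_mul_pow_sub_sum {ι : Type*} [Fintype ι] {R : ℝ → ℝ} {q : ι → ℝ} {m : ℕ}
    {e : ι → ℕ} (he : ∀ i, m + e i ≠ 0)
    (h : ∀ r, 0 < r → HasDerivAt R ((m * R r + ∑ i, q i / r ^ e i) / r) r) :
    ∃ a, ∀ r, 0 < r → R r = a * r ^ m - ∑ i, q i / (m + e i : ℕ) / r ^ e i := by
  have deriv_sum (r : ℝ) (hr : 0 < r) :
      HasDerivAt (fun r => -∑ i, q i / (m + e i : ℕ) / r ^ (m + e i))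
        ((∑ i, q i / r ^ e i) / r ^ (m + 1)) r := by
    refine (HasDerivAt.fun_sum fun i _ =>
      hasDerivAt_const_div_pow (q i / (m + e i : ℕ)) (m + e i) hr.ne').neg.congr_deriv ?_
    rw [← Finset.sum_neg_distrib, Finset.sum_div]
    refine Finset.sum_congr rfl fun i _ => ?_
    have : ((m + e i : ℕ) : ℝ) ≠ 0 := mod_cast he i
    rw [mul_div_cancel₀ _ this, neg_div, neg_neg, div_div, ← pow_add, ← add_assoc,
      add_comm (e i)]
  obtain ⟨a, ha⟩ := exists_eq_add_const_of_hasDerivAt (fun r hr =>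
    ((h r hr).div (hasDerivAt_pow m r) (pow_ne_zero m hr.ne')).congr_deriv (by
      obtain - | m := m
      · rw [pow_zero, Nat.cast_zero]; field_simp; ring
      · rw [Nat.add_sub_cancel]; field_simp; ring)) deriv_sum
  refine ⟨a, fun r hr => ?_⟩
  have := ha r hr
  rw [Pi.div_apply, div_eq_iff (pow_ne_zero m hr.ne')] at this
  rw [this, add_mul, neg_mul, Finset.sum_mul, neg_add_eq_sub]
  congr 1
  refine Finset.sum_congr rfl fun i _ => ?_
  rw [pow_add]
  field_simp

/-- The functions that are polynomials of degree at most three in `1/r` on `(0,∞)`. -/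
def inverseCubics : Submodule ℝ (ℝ → ℝ) where
  carrier := {φ | ∃ q : Fin 4 → ℝ, ∀ r, 0 < r → φ r = ∑ i, q i / r ^ (i : ℕ)}
  zero_mem' := ⟨0, by simp⟩
  add_mem' := by
    rintro φ ψ ⟨p, hp⟩ ⟨q, hq⟩
    exact ⟨p + q, fun r hr => by
      simp only [Pi.add_apply, hp r hr, hq r hr, add_div, Finset.sum_add_distrib]⟩
  smul_mem' := by
    rintro a φ ⟨q, hq⟩
    exact ⟨a • q, fun r hr => by
      simp only [Pi.smul_apply, smul_eq_mul, hq r hr, Finset.mul_sum, mul_div_assoc]⟩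

theorem exists_eq_of_mul_deriv_sub_mem_inverseCubics {R R' : ℝ → ℝ}
    (hR : ∀ r, 0 < r → HasDerivAt R (R' r) r)
    (h : (fun r => r * R' r - 2 * R r) ∈ inverseCubics) :
    ∃ a c₀ a₁ a₂ a₃, ∀ r, 0 < r →
      R r = a * r ^ 2 + c₀ + a₁ / r + a₂ / r ^ 2 + a₃ / r ^ 3 := by
  obtain ⟨q, hq⟩ := h
  obtain ⟨a, ha⟩ := exists_eq_mul_pow_sub_sum (m := 2) (e := fun i : Fin 4 => (i : ℕ)) (by simp)
    fun r hr => (hR r hr).congr_deriv (by rw [← hq r hr]; field_simp; push_cast; ring)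
  refine ⟨a, -(q 0 / 2), -(q 1 / 3), -(q 2 / 4), -(q 3 / 5), fun r hr => ?_⟩
  rw [ha r hr]
  simp only [Fin.sum_univ_four, Fin.isValue, Fin.coe_ofNat_eq_mod, Nat.reduceMod, Nat.reduceAdd,
    pow_zero, pow_one, div_one]
  push_cast
  ring

theorem exists_eq_of_sq_mul_deriv_mem_inverseCubics {R R' : ℝ → ℝ}
    (hR : ∀ r, 0 < r → HasDerivAt R (R' r) r)
    (h : (fun r => r ^ 2 * R' r) ∈ inverseCubics) :
    ∃ c₀ a₁ a₂ a₃ a₄, ∀ r, 0 < r →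
      R r = c₀ + a₁ / r + a₂ / r ^ 2 + a₃ / r ^ 3 + a₄ / r ^ 4 := by
  obtain ⟨q, hq⟩ := h
  obtain ⟨a, ha⟩ := exists_eq_mul_pow_sub_sum (m := 0) (e := fun i : Fin 4 => (i : ℕ) + 1)
    (q := q) (by simp) fun r hr => (hR r hr).congr_deriv (by
      simp only [pow_succ, ← div_div, ← Finset.sum_div]
      rw [← hq r hr]; field_simp; simp)
  refine ⟨a, -q 0, -(q 1 / 2), -(q 2 / 3), -(q 3 / 4), fun r hr => ?_⟩
  rw [ha r hr]
  simp only [Fin.sum_univ_four, Fin.isValue, Fin.coe_ofNat_eq_mod, Nat.reduceMod, Nat.reduceAdd,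
    pow_zero, pow_one]
  push_cast
  ring

-- `R/r - Q` and `R/r - 3Q` satisfy first order Euler equations.
theorem exists_eq_of_third_harmonic_mem_inverseCubics {R R' Q : ℝ → ℝ}
    (hR : ∀ r, 0 < r → HasDerivAt R (R' r) r) (hQ : ∀ r, 0 < r → HasDerivAt Q (R r / r ^ 2) r)
    (h : (fun r => -3 * R' r + 15 * R r / r - 9 * Q r) ∈ inverseCubics) :
    ∃ a d c₀ a₁ a₂, ∀ r, 0 < r → R r = a * r ^ 2 + d * r ^ 4 + c₀ + a₁ / r + a₂ / r ^ 2 := by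
  obtain ⟨q, hq⟩ := h
  have hR' (r : ℝ) (hr : 0 < r) :
      R' r = 5 * R r / r - 3 * Q r + ∑ i, (-(1 / 3) * q i) / r ^ (i : ℕ) := by
    simp only [mul_div_assoc, ← Finset.mul_sum]
    rw [← hq r hr]
    ring
  obtain ⟨d, hd⟩ := exists_eq_mul_pow_sub_sum (R := fun r => R r / r - Q r) (m := 3)
    (q := fun i => -(1 / 3) * q i) (e := fun i : Fin 4 => (i : ℕ)) (by simp) fun r hr =>
      (((hR r hr).div (hasDerivAt_id r) hr.ne').sub (hQ r hr)).congr_deriv (by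
        rw [hR' r hr]; simp only [id]; field_simp; push_cast; ring)
  obtain ⟨a, ha⟩ := exists_eq_mul_pow_sub_sum (R := fun r => R r / r - 3 * Q r) (m := 1)
    (q := fun i => -(1 / 3) * q i) (e := fun i : Fin 4 => (i : ℕ)) (by simp) fun r hr =>
      (((hR r hr).div (hasDerivAt_id r) hr.ne').sub ((hQ r hr).const_mul 3)).congr_deriv (by
        rw [hR' r hr]; simp only [id]; field_simp; push_cast; ring)
  refine ⟨-a / 2, 3 * d / 2, q 1 / 24, 2 * q 2 / 45, q 3 / 24, fun r hr => ?_⟩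
  have R_eq : R r = r * (3 * (R r / r - Q r) - (R r / r - 3 * Q r)) / 2 := by field_simp; ring
  rw [R_eq, hd r hr, ha r hr]
  simp only [Fin.sum_univ_four, Fin.isValue, Fin.coe_ofNat_eq_mod, Nat.reduceMod, Nat.reduceAdd,
    pow_zero, pow_one]
  push_cast
  field_simp
  ring

namespace LeadingCoeffs

variable {K : LeadingCoeffs}

theorem exists_f_ne_zero (h : ¬(K.A₁ = 0 ∧ K.A₂ = 0 ∧ K.A₃ = 0 ∧ K.A₄ = 0)) :
    ∃ t, K.f t ≠ 0 := by
  contrapose! h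
  have := eq_zero_of_forall_sum_mul_harmonics (x := ![K.A₁, K.A₂, K.A₃, K.A₄, 0, 0])
    fun t => by simpa [Fin.sum_univ_six, harmonics, f] using h t
  exact ⟨congrFun this 0, congrFun this 1, congrFun this 2, congrFun this 3⟩

theorem eq_zero_of_forall_mul_deriv_b_eq_zero (hB : ¬(K.B₁ = 0 ∧ K.B₂ = 0)) {a : ℝ}
    (h : ∀ t, a * K.b⁽¹⁾ t = 0) : a = 0 := by
  have := eq_zero_of_forall_sum_mul_harmonics (x := ![0, 0, 0, 0, 2 * a * K.B₂, -2 * a * K.B₁])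
    fun t => by
      simp only [Fin.sum_univ_six, harmonics, Matrix.cons_val_zero, Matrix.cons_val_one,
        Matrix.cons_val, Fin.isValue]
      linear_combination (norm := (rw [K.deriv_b]; ring)) h t
  by_contra ha
  exact hB ⟨by simpa [ha] using congrFun this 5, by simpa [ha] using congrFun this 4⟩

theorem eq_zero_of_forall_mul_c_eq_zero (hC : ¬(K.C₁ = 0 ∧ K.C₂ = 0)) {a : ℝ}
    (h : ∀ t, a * K.c t = 0) : a = 0 := by
  have := eq_zero_of_forall_sum_mul_harmonics (x := ![0, 0, a * K.C₁, a * K.C₂, 0, 0])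
    fun t => by
      simp only [Fin.sum_univ_six, harmonics, Matrix.cons_val_zero, Matrix.cons_val_one,
        Matrix.cons_val, Fin.isValue]
      linear_combination (norm := (rw [c]; ring)) h t
  by_contra ha
  exact hC ⟨by simpa [ha] using congrFun this 2, by simpa [ha] using congrFun this 3⟩

theorem deriv_deriv_f_of_A₁_A₂ (hA₁ : K.A₁ = 0) (hA₂ : K.A₂ = 0) (t : ℝ) :
    K.f⁽²⁾ t = -K.f t := by
  rw [K.deriv_deriv_f, f, hA₁, hA₂]
  ring

end LeadingCoeffs

namespace IntegratedEquations

variable {K : LeadingCoeffs} {H : ℝ} {R Q S g g₂ : ℝ → ℝ}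

theorem hasDerivAt_R (h : IntegratedEquations K H R Q S g g₂) {r : ℝ} (hr : 0 < r) :
    HasDerivAt R (R⁽¹⁾ r) r :=
  (h.contDiffOn_R.differentiableOn (by simp)).hasDerivAt (Ioi_mem_nhds hr)

theorem contDiffOn_deriv_R (h : IntegratedEquations K H R Q S g g₂) :
    ContDiffOn ℝ ∞ R⁽¹⁾ (Ioi 0) :=
  h.contDiffOn_R.deriv_of_isOpen isOpen_Ioi (by simp)

theorem separation (h : IntegratedEquations K H R Q S g g₂) (i : Fin 6) :
    ![K.A₁ • fun r => -3 * R⁽¹⁾ r + 15 * R r / r - 9 * Q r,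
      K.A₂ • fun r => -3 * R⁽¹⁾ r + 15 * R r / r - 9 * Q r,
      fun r => (K.A₃ + K.C₁ * r ^ 2) * R⁽¹⁾ r - K.A₃ * (R r / r + Q r),
      fun r => (K.A₄ + K.C₂ * r ^ 2) * R⁽¹⁾ r - K.A₄ * (R r / r + Q r),
      (2 * K.B₂) • fun r => r * R⁽¹⁾ r - 2 * R r,
      (-2 * K.B₁) • fun r => r * R⁽¹⁾ r - 2 * R r] i ∈ inverseCubics := by
  refine mem_of_forall_sum_smul_mem linearIndependent_harmonics inverseCubics
    (fun t => ⟨![g₂⁽¹⁾ t - 3 * K.D₀ * S⁽¹⁾ t, K.ℓ₁ S g t, K.ℓ₂ S t, K.ℓ₃ S t], fun r hr => ?_⟩) i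
  have := h.linear r hr t
  rw [K.deriv_deriv_f, LeadingCoeffs.f, LeadingCoeffs.c, K.deriv_b] at this
  simp only [Fin.sum_univ_six, Fin.sum_univ_four, harmonics, Matrix.cons_val_zero,
    Matrix.cons_val_one, Matrix.cons_val, Pi.add_apply, Pi.smul_apply, smul_eq_mul,
    Fin.isValue, Fin.coe_ofNat_eq_mod, Nat.reduceMod, pow_zero, pow_one, div_one]
  linear_combination this

theorem third_harmonic_mem (h : IntegratedEquations K H R Q S g g₂)
    (hA : ¬(K.A₁ = 0 ∧ K.A₂ = 0)) :
    (fun r => -3 * R⁽¹⁾ r + 15 * R r / r - 9 * Q r) ∈ inverseCubics := by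
  by_cases hA₁ : K.A₁ = 0
  · exact (inverseCubics.smul_mem_iff fun hA₂ => hA ⟨hA₁, hA₂⟩).1 (h.separation 1)
  · exact (inverseCubics.smul_mem_iff hA₁).1 (h.separation 0)

theorem second_harmonic_mem (h : IntegratedEquations K H R Q S g g₂)
    (hB : ¬(K.B₁ = 0 ∧ K.B₂ = 0)) : (fun r => r * R⁽¹⁾ r - 2 * R r) ∈ inverseCubics := by
  by_cases hB₁ : K.B₁ = 0
  · exact (inverseCubics.smul_mem_iff (mul_ne_zero two_ne_zero fun hB₂ => hB ⟨hB₁, hB₂⟩)).1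
      (h.separation 4)
  · exact (inverseCubics.smul_mem_iff (mul_ne_zero (by norm_num) hB₁)).1 (h.separation 5)

theorem sq_mul_deriv_mem (h : IntegratedEquations K H R Q S g g₂)
    (hAC : K.A₃ * K.C₂ - K.A₄ * K.C₁ ≠ 0) : (fun r => r ^ 2 * R⁽¹⁾ r) ∈ inverseCubics := by
  rw [← inverseCubics.smul_mem_iff hAC]
  convert inverseCubics.sub_mem (inverseCubics.smul_mem K.A₃ (h.separation 3))
    (inverseCubics.smul_mem K.A₄ (h.separation 2)) using 1
  ext r
  simp only [Pi.sub_apply, Pi.smul_apply, Matrix.cons_val, smul_eq_mul]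
  ring

theorem sq_mul_deriv_mem_of_A₃_A₄ (h : IntegratedEquations K H R Q S g g₂) (hA₃ : K.A₃ = 0)
    (hA₄ : K.A₄ = 0) (hC : ¬(K.C₁ = 0 ∧ K.C₂ = 0)) :
    (fun r => r ^ 2 * R⁽¹⁾ r) ∈ inverseCubics := by
  by_cases hC₁ : K.C₁ = 0
  · refine (inverseCubics.smul_mem_iff fun hC₂ => hC ⟨hC₁, hC₂⟩).1 ?_
    convert h.separation 3 using 1
    ext r
    simp [hA₄, mul_assoc]
  · refine (inverseCubics.smul_mem_iff hC₁).1 ?_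
    convert h.separation 2 using 1
    ext r
    simp [hA₃, mul_assoc]

end IntegratedEquations

theorem deriv_eq_of_eqOn_Ioi {φ ψ : ℝ → ℝ} {a x d : ℝ} (h : ∀ y, a < y → φ y = ψ y)
    (hψ : HasDerivAt ψ d x) (hx : a < x) : deriv φ x = d :=
  (hψ.congr_of_eventuallyEq (Filter.eventuallyEq_of_mem (Ioi_mem_nhds hx) h)).deriv

theorem eq_zero_of_forall_pos_eq_zero {φ : ℝ → ℝ} (hφ : Continuous φ) (h : ∀ s, 0 < s → φ s = 0) :
    φ 0 = 0 :=
  closure_minimal (s := Ioi (0 : ℝ)) h (isClosed_singleton.preimage hφ)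
    (by simp [closure_Ioi])

theorem deriv_eq_of_eq_zpow_mul_comp_inv {φ p : ℝ → ℝ} {k : ℤ} (hp : ContDiff ℝ ∞ p)
    (h : ∀ r, 0 < r → φ r = r ^ k * p r⁻¹) {r : ℝ} (hr : 0 < r) :
    deriv φ r = r ^ (k - 1) * (k * p r⁻¹ - r⁻¹ * p⁽¹⁾ r⁻¹) := by
  refine deriv_eq_of_eqOn_Ioi h (((hasDerivAt_zpow k r (.inl hr.ne')).mul
    ((hasDerivAt_deriv hp _).comp r (hasDerivAt_inv hr.ne'))).congr_deriv ?_) hr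
  rw [zpow_sub_one₀ hr.ne', Function.comp_apply]
  field_simp
  ring

namespace IntegratedEquations

variable {K : LeadingCoeffs} {H : ℝ} {R Q S g g₂ : ℝ → ℝ}

theorem f_mul_sq_eq_zero_of_eq_zpow_mul_comp_inv (h : IntegratedEquations K H R Q S g g₂) {m : ℕ}
    (hm : m ≠ 0) {p u : ℝ → ℝ} (hp : ContDiff ℝ ∞ p) (hu : Continuous u)
    (hR : ∀ r, 0 < r → R r = r ^ (m : ℤ) * p r⁻¹)
    (hQ : ∀ r, 0 < r → Q r = r ^ (m - 1 : ℤ) * u r⁻¹) (t : ℝ) :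
    K.f t * p 0 ^ 2 = 0 := by
  obtain ⟨p₁, hp₁, p₁_def⟩ : ∃ p₁, ContDiff ℝ ∞ p₁ ∧ ∀ s, p₁ s = m * p s - s * p⁽¹⁾ s :=
    ⟨_, by have := contDiff_deriv hp; fun_prop, fun _ => rfl⟩
  obtain ⟨p₂, hp₂, p₂_def⟩ : ∃ p₂, ContDiff ℝ ∞ p₂ ∧ ∀ s, p₂ s = (m - 1) * p₁ s - s * p₁⁽¹⁾ s :=
    ⟨_, by have := contDiff_deriv hp₁; fun_prop, fun _ => rfl⟩
  obtain ⟨p₃, hp₃, p₃_def⟩ : ∃ p₃, ContDiff ℝ ∞ p₃ ∧ ∀ s, p₃ s = (m - 2) * p₂ s - s * p₂⁽¹⁾ s :=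
    ⟨_, by have := contDiff_deriv hp₂; fun_prop, fun _ => rfl⟩
  have hR₁ (r : ℝ) (hr : 0 < r) : R⁽¹⁾ r = r ^ (m - 1 : ℤ) * p₁ r⁻¹ := by
    rw [deriv_eq_of_eq_zpow_mul_comp_inv hp hR hr, p₁_def]; norm_cast
  have hR₂ (r : ℝ) (hr : 0 < r) : R⁽²⁾ r = r ^ (m - 1 - 1 : ℤ) * p₂ r⁻¹ := by
    rw [deriv_eq_of_eq_zpow_mul_comp_inv hp₁ hR₁ hr, p₂_def]; push_cast; rfl
  have hR₃ (r : ℝ) (hr : 0 < r) : R⁽³⁾ r = r ^ (m - 1 - 1 - 1 : ℤ) * p₃ r⁻¹ := by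
    rw [deriv_eq_of_eq_zpow_mul_comp_inv hp₂ hR₂ hr, p₃_def]; push_cast; ring
  have leading := eq_zero_of_forall_pos_eq_zero (φ := fun s => 3 * K.f t * p s * p₁ s + s ^ m * (
      (g t - s * K.b t * S⁽¹⁾ t + s ^ 2 * (3 * K.f t * S t - K.f⁽¹⁾ t * S⁽¹⁾ t / 2)) * p₁ s
      - 6 * s ^ 2 * K.f t * S t * p s
      + s * S⁽¹⁾ t * (2 * K.b t * p s + 2 * s * K.f⁽¹⁾ t * p s - s * K.f⁽¹⁾ t * u s)
      + s ^ m * (s * K.n₂ H S g₂ t + s ^ 2 * K.n₃ H S g t + s ^ 3 * K.n₄ H S t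
        + s ^ 4 * K.n₅ H S t)
      - H * (s ^ 2 * K.f t * p₃ s
        + (s ^ 2 * ((K.f⁽²⁾ t + 3 * K.f t) / 2) + s * K.b⁽¹⁾ t + K.c t) * p₂ s
        - (s ^ 2 * ((K.f⁽²⁾ t + 3 * K.f t) / 2) + s * K.b⁽¹⁾ t - K.c t) * p₁ s)))
    (by fun_prop) fun s hs => ?_
  · simp only [zero_pow hm, zero_mul, add_zero, p₁_def, sub_zero] at leading
    have : (m : ℝ) ≠ 0 := mod_cast hm
    simpa [this, mul_assoc, sq] using leading
  · have hs' := inv_pos.2 hs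
    have quad := h.quadratic s⁻¹ hs' t
    rw [hR _ hs', hR₁ _ hs', hR₂ _ hs', hR₃ _ hs', hQ _ hs'] at quad
    simp only [zpow_sub_one₀ hs'.ne', zpow_natCast, inv_inv, inv_pow] at quad
    field_simp at quad ⊢
    linear_combination quad

theorem exists_Q_eq (h : IntegratedEquations K H R Q S g g₂) {a d c₀ a₁ a₂ a₃ a₄ : ℝ}
    (hR : ∀ r, 0 < r →
      R r = a * r ^ 2 + d * r ^ 4 + c₀ + a₁ / r + a₂ / r ^ 2 + a₃ / r ^ 3 + a₄ / r ^ 4) :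
    ∃ q, ∀ r, 0 < r → Q r = a * r + d / 3 * r ^ 3 - c₀ / r ^ 1 - a₁ / 2 / r ^ 2 - a₂ / 3 / r ^ 3
      - a₃ / 4 / r ^ 4 - a₄ / 5 / r ^ 5 + q :=
  exists_eq_add_const_of_hasDerivAt h.hasDerivAt_Q fun r hr =>
    (((((((hasDerivAt_id r).const_mul a).add ((hasDerivAt_pow 3 r).const_mul (d / 3))).sub
      (hasDerivAt_const_div_pow c₀ 1 hr.ne')).sub
      (hasDerivAt_const_div_pow (a₁ / 2) 2 hr.ne')).sub
      (hasDerivAt_const_div_pow (a₂ / 3) 3 hr.ne')).sub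
      (hasDerivAt_const_div_pow (a₃ / 4) 4 hr.ne')).sub
      (hasDerivAt_const_div_pow (a₄ / 5) 5 hr.ne') |>.congr_deriv (by
        rw [hR r hr]; field_simp; push_cast; ring)

theorem eq_zero_of_f_ne_zero (h : IntegratedEquations K H R Q S g g₂) {t : ℝ} (hf : K.f t ≠ 0)
    {a d c₀ a₁ a₂ : ℝ}
    (hR : ∀ r, 0 < r → R r = a * r ^ 2 + d * r ^ 4 + c₀ + a₁ / r + a₂ / r ^ 2) :
    a = 0 ∧ d = 0 := by
  obtain ⟨q, hQ⟩ := h.exists_Q_eq (a := a) (d := d) (c₀ := c₀) (a₁ := a₁) (a₂ := a₂) (a₃ := 0)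
    (a₄ := 0) fun r hr => by rw [hR r hr]; ring
  have d_eq_zero : d = 0 := by
    have := h.f_mul_sq_eq_zero_of_eq_zpow_mul_comp_inv (m := 4) (by simp)
      (p := fun s => a * s ^ 2 + d + c₀ * s ^ 4 + a₁ * s ^ 5 + a₂ * s ^ 6)
      (u := fun s => a * s ^ 2 + d / 3 - c₀ * s ^ 4 - a₁ / 2 * s ^ 5 - a₂ / 3 * s ^ 6 + q * s ^ 3)
      (by fun_prop) (by fun_prop)
      (fun r hr => by rw [hR r hr]; norm_cast; field_simp)
      (fun r hr => by
        rw [hQ r hr, show ((4 : ℕ) : ℤ) - 1 = (3 : ℕ) from rfl]; norm_cast; field_simp; ring) t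
    simpa [hf] using this
  refine ⟨?_, d_eq_zero⟩
  have := h.f_mul_sq_eq_zero_of_eq_zpow_mul_comp_inv (m := 2) (by simp)
    (p := fun s => a + c₀ * s ^ 2 + a₁ * s ^ 3 + a₂ * s ^ 4)
    (u := fun s => a - c₀ * s ^ 2 - a₁ / 2 * s ^ 3 - a₂ / 3 * s ^ 4 + q * s)
    (by fun_prop) (by fun_prop)
    (fun r hr => by rw [hR r hr, d_eq_zero]; norm_cast; field_simp; ring)
    (fun r hr => by
      rw [hQ r hr, d_eq_zero, show ((2 : ℕ) : ℤ) - 1 = (1 : ℕ) from rfl]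
      norm_cast; field_simp; ring) t
  simpa [hf] using this

end IntegratedEquations

/-- The second alternative of the classification: `R` is a Coulomb or an oscillator potential, up to
the terms `c₀ + c₂/r²`. -/
def IsCoulombOrOscillator (K : LeadingCoeffs) (R : ℝ → ℝ) : Prop :=
  ∃ a₃ a₄ c₀ c₂ : ℝ, (∀ r ∈ Ioi (0 : ℝ), R r = a₃ / r + a₄ * r ^ 2 + c₀ + c₂ / r ^ 2) ∧
    a₃ * a₄ = 0 ∧ (a₄ ≠ 0 → K.C₁ = 0 ∧ K.C₂ = 0)

theorem isCoulombOrOscillator_of_eq_coulomb {K : LeadingCoeffs} {R : ℝ → ℝ} (c₀ a₁ a₂ : ℝ)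
    (hR : ∀ r, 0 < r → R r = c₀ + a₁ / r + a₂ / r ^ 2) : IsCoulombOrOscillator K R :=
  ⟨a₁, 0, c₀, a₂, fun r hr => by rw [hR r hr]; ring, mul_zero _, fun h => absurd rfl h⟩

theorem deriv_of_eq_laurent {R : ℝ → ℝ} {a c₀ a₁ a₂ a₃ a₄ r : ℝ}
    (hR : ∀ r, 0 < r → R r = a * r ^ 2 + c₀ + a₁ / r + a₂ / r ^ 2 + a₃ / r ^ 3 + a₄ / r ^ 4)
    (hr : 0 < r) :
    R⁽¹⁾ r = 2 * a * r - a₁ / r ^ 2 - 2 * a₂ / r ^ 3 - 3 * a₃ / r ^ 4 - 4 * a₄ / r ^ 5 := by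
  refine deriv_eq_of_eqOn_Ioi (ψ := fun r =>
    a * r ^ 2 + c₀ + a₁ / r ^ 1 + a₂ / r ^ 2 + a₃ / r ^ 3 + a₄ / r ^ 4)
    (fun r hr => by rw [hR r hr, pow_one]) ?_ hr
  exact (((((((hasDerivAt_pow 2 r).const_mul a).add_const c₀).add
    (hasDerivAt_const_div_pow a₁ 1 hr.ne')).add (hasDerivAt_const_div_pow a₂ 2 hr.ne')).add
    (hasDerivAt_const_div_pow a₃ 3 hr.ne')).add
    (hasDerivAt_const_div_pow a₄ 4 hr.ne')).congr_deriv (by push_cast; ring)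

theorem deriv_deriv_of_eq_laurent {R : ℝ → ℝ} {a c₀ a₁ a₂ a₃ a₄ r : ℝ}
    (hR : ∀ r, 0 < r → R r = a * r ^ 2 + c₀ + a₁ / r + a₂ / r ^ 2 + a₃ / r ^ 3 + a₄ / r ^ 4)
    (hr : 0 < r) :
    R⁽²⁾ r = 2 * a + 2 * a₁ / r ^ 3 + 6 * a₂ / r ^ 4 + 12 * a₃ / r ^ 5 + 20 * a₄ / r ^ 6 := by
  refine deriv_eq_of_eqOn_Ioi (fun r hr => deriv_of_eq_laurent hR hr) ?_ hr
  exact ((((((hasDerivAt_id r).const_mul (2 * a)).sub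
    (hasDerivAt_const_div_pow a₁ 2 hr.ne')).sub
    (hasDerivAt_const_div_pow (2 * a₂) 3 hr.ne')).sub
    (hasDerivAt_const_div_pow (3 * a₃) 4 hr.ne')).sub
    (hasDerivAt_const_div_pow (4 * a₄) 5 hr.ne')).congr_deriv (by push_cast; ring)

namespace IntegratedEquations

variable {K : LeadingCoeffs} {H : ℝ} {R Q S g g₂ : ℝ → ℝ} {a c₀ a₁ a₂ a₃ a₄ : ℝ}

theorem linear_coeffs (h : IntegratedEquations K H R Q S g g₂) (hA₁ : K.A₁ = 0) (hA₂ : K.A₂ = 0)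
    (hR : ∀ r, 0 < r → R r = a * r ^ 2 + c₀ + a₁ / r + a₂ / r ^ 2 + a₃ / r ^ 3 + a₄ / r ^ 4)
    (t : ℝ) :
    a₄ * K.f t = 0 ∧ 15 / 4 * a₃ * K.f t + 6 * a₄ * K.b⁽¹⁾ t = 0 ∧
      8 / 3 * a₂ * K.f t + 5 * a₃ * K.b⁽¹⁾ t + 4 * a₄ * K.c t + K.ℓ₃ S t = 0 ∧
      3 / 2 * a₁ * K.f t + 4 * a₂ * K.b⁽¹⁾ t + 3 * a₃ * K.c t + K.ℓ₂ S t = 0 ∧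
      3 * a₁ * K.b⁽¹⁾ t + 2 * a₂ * K.c t + K.ℓ₁ S g t = 0 ∧ a * K.c t = 0 := by
  obtain ⟨q, hQ⟩ := h.exists_Q_eq (a := a) (d := 0) (c₀ := c₀) (a₁ := a₁) (a₂ := a₂)
    (a₃ := a₃) (a₄ := a₄) fun r hr => by rw [hR r hr]; ring
  have coeffs := eq_zero_of_forall_pos_sum_mul_pow_eq_zero (c := ![
      -24 / 5 * a₄ * K.f t,
      -(15 / 4 * a₃ * K.f t + 6 * a₄ * K.b⁽¹⁾ t),
      -(8 / 3 * a₂ * K.f t + 5 * a₃ * K.b⁽¹⁾ t + 4 * a₄ * K.c t + K.ℓ₃ S t),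
      -(3 / 2 * a₁ * K.f t + 4 * a₂ * K.b⁽¹⁾ t + 3 * a₃ * K.c t + K.ℓ₂ S t),
      -(3 * a₁ * K.b⁽¹⁾ t + 2 * a₂ * K.c t + K.ℓ₁ S g t),
      -(a₁ * K.c t + 2 * c₀ * K.b⁽¹⁾ t + q * K.f t + g₂⁽¹⁾ t - 3 * K.D₀ * S⁽¹⁾ t),
      0, 0, 2 * a * K.c t]) fun r hr => by
    have := h.linear r hr t
    rw [hR r hr, hQ r hr, deriv_of_eq_laurent hR hr,
      LeadingCoeffs.deriv_deriv_f_of_A₁_A₂ hA₁ hA₂] at this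
    simp only [Fin.sum_univ_succ, Fin.sum_univ_zero, Matrix.cons_val_zero, Matrix.cons_val_succ,
      Fin.val_succ, Fin.val_zero, Fin.isValue]
    linear_combination (norm := (field_simp; ring)) r ^ 5 * this
  have c4 := congrFun coeffs 0
  have c3 := congrFun coeffs 1
  have c2 := congrFun coeffs 2
  have c1 := congrFun coeffs 3
  have c0 := congrFun coeffs 4
  have ca := congrFun coeffs 8
  simp only [Matrix.cons_val_zero, Matrix.cons_val_one, Matrix.cons_val, Pi.zero_apply]
    at c4 c3 c2 c1 c0 ca
  refine ⟨by linear_combination -5 / 24 * c4, neg_eq_zero.1 c3, neg_eq_zero.1 c2,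
    neg_eq_zero.1 c1, neg_eq_zero.1 c0, by linear_combination ca / 2⟩

theorem quadratic_coeffs (h : IntegratedEquations K H R Q S g g₂) (hf : K.f = 0)
    (hR : ∀ r, 0 < r → R r = a * r ^ 2 + c₀ + a₁ / r + a₂ / r ^ 2 + a₃ / r ^ 3) (t : ℝ) :
    a₃ * (K.b t * S⁽¹⁾ t - 3 * H * K.b⁽¹⁾ t) = 0 ∧ a * (g t - 2 * H * K.c t) = 0 := by
  have hR' (r : ℝ) (hr : 0 < r) :
      R r = a * r ^ 2 + c₀ + a₁ / r + a₂ / r ^ 2 + a₃ / r ^ 3 + 0 / r ^ 4 := by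
    rw [hR r hr, zero_div, add_zero]
  have coeffs := eq_zero_of_forall_pos_sum_mul_pow_eq_zero (c := ![
      5 * a₃ * (K.b t * S⁽¹⁾ t - 3 * H * K.b⁽¹⁾ t),
      -3 * a₃ * g t + 4 * a₂ * K.b t * S⁽¹⁾ t + K.n₄ H S t
        - H * (8 * a₂ * K.b⁽¹⁾ t + 9 * a₃ * K.c t),
      -2 * a₂ * g t + 3 * a₁ * K.b t * S⁽¹⁾ t + K.n₃ H S g t
        - H * (3 * a₁ * K.b⁽¹⁾ t + 4 * a₂ * K.c t),
      -a₁ * g t + 2 * c₀ * K.b t * S⁽¹⁾ t + K.n₂ H S g₂ t - H * a₁ * K.c t,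
      0, 0, 2 * a * (g t - 2 * H * K.c t)]) fun r hr => by
    have := h.quadratic r hr t
    rw [hR' r hr, deriv_of_eq_laurent hR' hr, deriv_deriv_of_eq_laurent hR' hr,
      LeadingCoeffs.n₅, hf] at this
    simp only [Pi.zero_def, deriv_const'] at this
    simp only [Fin.sum_univ_succ, Fin.sum_univ_zero, Matrix.cons_val_zero, Matrix.cons_val_succ,
      Fin.val_succ, Fin.val_zero, Fin.isValue]
    linear_combination (norm := (field_simp; ring)) r ^ 5 * this
  have c3 := congrFun coeffs 0
  have ca := congrFun coeffs 6
  simp only [Matrix.cons_val_zero, Matrix.cons_val, Pi.zero_apply] at c3 ca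
  exact ⟨by linear_combination c3 / 5, by linear_combination ca / 2⟩

end IntegratedEquations

namespace IntegratedEquations

variable {K : LeadingCoeffs} {H : ℝ} {R Q S g g₂ : ℝ → ℝ} {a c₀ a₁ a₂ a₃ a₄ : ℝ}

theorem isCoulombOrOscillator_of_f_ne_zero (h : IntegratedEquations K H R Q S g g₂)
    (hA₁ : K.A₁ = 0) (hA₂ : K.A₂ = 0) {t : ℝ} (hf : K.f t ≠ 0)
    (hR : ∀ r, 0 < r → R r = a * r ^ 2 + c₀ + a₁ / r + a₂ / r ^ 2 + a₃ / r ^ 3 + a₄ / r ^ 4) :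
    IsCoulombOrOscillator K R := by
  obtain ⟨h₄, h₃, -⟩ := h.linear_coeffs hA₁ hA₂ hR t
  obtain rfl : a₄ = 0 := by simpa [hf] using h₄
  obtain rfl : a₃ = 0 := by simpa [hf] using h₃
  obtain ⟨rfl, -⟩ := h.eq_zero_of_f_ne_zero hf (a := a) (d := 0) (c₀ := c₀) (a₁ := a₁) (a₂ := a₂)
    fun r hr => by rw [hR r hr]; ring
  exact isCoulombOrOscillator_of_eq_coulomb c₀ a₁ a₂ fun r hr => by rw [hR r hr]; ring

theorem isCoulombOrOscillator_of_f_eq_zero_of_b (h : IntegratedEquations K H R Q S g g₂)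
    (hA₁ : K.A₁ = 0) (hA₂ : K.A₂ = 0) (hf : K.f = 0) (hB : ¬(K.B₁ = 0 ∧ K.B₂ = 0))
    (hR : ∀ r, 0 < r → R r = a * r ^ 2 + c₀ + a₁ / r + a₂ / r ^ 2 + a₃ / r ^ 3 + a₄ / r ^ 4) :
    IsCoulombOrOscillator K R := by
  have coeffs := h.linear_coeffs hA₁ hA₂ hR
  obtain rfl : a₄ = 0 := K.eq_zero_of_forall_mul_deriv_b_eq_zero hB fun t => by
    simpa [hf] using (coeffs t).2.1
  have ℓ₃_eq_zero (t : ℝ) : K.ℓ₃ S t = 0 := by simp [LeadingCoeffs.ℓ₃, hf, Pi.zero_def]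
  obtain rfl : a₃ = 0 := K.eq_zero_of_forall_mul_deriv_b_eq_zero hB fun t => by
    simpa [hf, ℓ₃_eq_zero] using (coeffs t).2.2.1
  have a_mul_c (t : ℝ) : a * K.c t = 0 := (coeffs t).2.2.2.2.2
  by_cases hC : K.C₁ = 0 ∧ K.C₂ = 0
  · obtain rfl | ha := eq_or_ne a 0
    · exact isCoulombOrOscillator_of_eq_coulomb c₀ a₁ a₂ fun r hr => by rw [hR r hr]; ring
    have c_eq_zero : K.c = 0 := by ext t; simp [LeadingCoeffs.c, hC]
    have g_eq_zero : g = 0 := by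
      ext t
      simpa [ha, c_eq_zero] using (h.quadratic_coeffs hf (a := a) (c₀ := c₀) (a₁ := a₁)
        (a₂ := a₂) (a₃ := 0) (fun r hr => by rw [hR r hr]; ring) t).2
    obtain rfl : a₁ = 0 := K.eq_zero_of_forall_mul_deriv_b_eq_zero hB fun t => by
      simpa [LeadingCoeffs.ℓ₁, c_eq_zero, g_eq_zero, Pi.zero_def] using (coeffs t).2.2.2.2.1
    exact ⟨0, a, c₀, a₂, fun r hr => by rw [hR r hr]; ring, zero_mul a, fun _ => hC⟩
  · obtain rfl := K.eq_zero_of_forall_mul_c_eq_zero hC a_mul_c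
    exact isCoulombOrOscillator_of_eq_coulomb c₀ a₁ a₂ fun r hr => by rw [hR r hr]; ring

theorem isCoulombOrOscillator_of_f_eq_zero_of_c (h : IntegratedEquations K H R Q S g g₂)
    (hA₁ : K.A₁ = 0) (hA₂ : K.A₂ = 0) (hf : K.f = 0) (hB : K.B₁ = 0 ∧ K.B₂ = 0)
    (hC : ¬(K.C₁ = 0 ∧ K.C₂ = 0))
    (hR : ∀ r, 0 < r → R r = a * r ^ 2 + c₀ + a₁ / r + a₂ / r ^ 2 + a₃ / r ^ 3 + a₄ / r ^ 4) :
    IsCoulombOrOscillator K R := by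
  have coeffs := h.linear_coeffs hA₁ hA₂ hR
  have b_eq : K.b = fun _ => K.B₀ := by ext t; simp [LeadingCoeffs.b, hB]
  obtain rfl := K.eq_zero_of_forall_mul_c_eq_zero hC fun t => (coeffs t).2.2.2.2.2
  obtain rfl : a₄ = 0 := K.eq_zero_of_forall_mul_c_eq_zero hC fun t => by
    simpa [LeadingCoeffs.ℓ₃, hf, b_eq, Pi.zero_def] using (coeffs t).2.2.1
  have a₃_mul (t : ℝ) : a₃ = 0 ∨ K.B₀ = 0 ∨ S⁽¹⁾ t = 0 := by
    simpa [b_eq] using (h.quadratic_coeffs hf (a := 0) (c₀ := c₀) (a₁ := a₁)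
      (a₂ := a₂) (a₃ := a₃) (fun r hr => by rw [hR r hr]; ring) t).1
  obtain rfl : a₃ = 0 := by
    by_contra ha₃
    have ℓ₂_eq_zero (t : ℝ) : K.ℓ₂ S t = 0 := by
      by_cases hB₀ : K.B₀ = 0
      · simp [LeadingCoeffs.ℓ₂, b_eq, hB₀]
      · have : S⁽¹⁾ = 0 := funext fun t => ((a₃_mul t).resolve_left ha₃).resolve_left hB₀
        simp [LeadingCoeffs.ℓ₂, b_eq, this, Pi.zero_def]
    exact ha₃ (K.eq_zero_of_forall_mul_c_eq_zero hC fun t => by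
      simpa [hf, b_eq, ℓ₂_eq_zero] using (coeffs t).2.2.2.1)
  exact isCoulombOrOscillator_of_eq_coulomb c₀ a₁ a₂ fun r hr => by rw [hR r hr]; ring

end IntegratedEquations

/-- `f ≠ 0` consists of first harmonics, `c = l f`, and `b` is constant. In this case separating the
harmonics of the linear equation gives a single condition on `R`. -/
structure LeadingCoeffs.IsAligned (K : LeadingCoeffs) (l : ℝ) : Prop where
  A₁ : K.A₁ = 0
  A₂ : K.A₂ = 0
  A₃_or_A₄ : ¬(K.A₃ = 0 ∧ K.A₄ = 0)
  B₁ : K.B₁ = 0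
  B₂ : K.B₂ = 0
  C₁ : K.C₁ = l * K.A₃
  C₂ : K.C₂ = l * K.A₄

namespace LeadingCoeffs.IsAligned

variable {K : LeadingCoeffs} {l : ℝ}

theorem b_eq (hK : K.IsAligned l) : K.b = fun _ => K.B₀ := by
  ext t
  simp [b, hK.B₁, hK.B₂]

theorem c_eq (hK : K.IsAligned l) : K.c = fun t => l * K.f t := by
  ext t
  simp only [c, f, hK.A₁, hK.A₂, hK.C₁, hK.C₂]
  ring

theorem deriv_c_eq (hK : K.IsAligned l) : K.c⁽¹⁾ = fun t => l * K.f⁽¹⁾ t := by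
  rw [hK.c_eq]
  exact deriv_eq fun t => (hasDerivAt_deriv K.contDiff_f t).const_mul l

theorem deriv_deriv_f_eq (hK : K.IsAligned l) : K.f⁽²⁾ = fun t => -K.f t :=
  funext (deriv_deriv_f_of_A₁_A₂ hK.A₁ hK.A₂)

theorem deriv_deriv_deriv_f_eq (hK : K.IsAligned l) : K.f⁽³⁾ = fun t => -K.f⁽¹⁾ t := by
  rw [hK.deriv_deriv_f_eq]
  exact deriv_eq fun t => (hasDerivAt_deriv K.contDiff_f t).neg

theorem hasDerivAt_deriv_f (hK : K.IsAligned l) (t : ℝ) : HasDerivAt K.f⁽¹⁾ (-K.f t) t := by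
  simpa only [hK.deriv_deriv_f_eq] using hasDerivAt_deriv (contDiff_deriv K.contDiff_f) t

theorem f_ne_zero_of_deriv_f_eq_zero (hK : K.IsAligned l) {t : ℝ} (ht : K.f⁽¹⁾ t = 0) :
    K.f t ≠ 0 := by
  intro hf
  have sq_add_sq : K.f t ^ 2 + K.f⁽¹⁾ t ^ 2 = K.A₃ ^ 2 + K.A₄ ^ 2 := by
    rw [K.deriv_f, f, hK.A₁, hK.A₂]
    linear_combination (K.A₃ ^ 2 + K.A₄ ^ 2) * cos_sq_add_sin_sq t
  rw [hf, ht] at sq_add_sq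
  exact hK.A₃_or_A₄ ⟨by nlinarith [sq_nonneg K.A₃, sq_nonneg K.A₄],
    by nlinarith [sq_nonneg K.A₃, sq_nonneg K.A₄]⟩

theorem periodic_f (hK : K.IsAligned l) : Function.Periodic K.f (2 * π) := fun t => by
  simp [f, hK.A₁, hK.A₂]

theorem periodic_deriv_f (hK : K.IsAligned l) : Function.Periodic K.f⁽¹⁾ (2 * π) := fun t => by
  simp [deriv_f, hK.A₁, hK.A₂]

theorem exists_deriv_f_eq_zero (hK : K.IsAligned l) : ∃ t, K.f⁽¹⁾ t = 0 := by
  obtain ⟨t, -, ht⟩ := exists_deriv_eq_zero two_pi_pos K.contDiff_f.continuous.continuousOn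
    (by simpa using (hK.periodic_f 0).symm)
  exact ⟨t, ht⟩

theorem exists_deriv_f_ne_zero (hK : K.IsAligned l) : ∃ t, K.f⁽¹⁾ t ≠ 0 := by
  by_contra! h
  obtain ⟨t, ht⟩ := hK.exists_deriv_f_eq_zero
  refine hK.f_ne_zero_of_deriv_f_eq_zero ht ?_
  exact neg_eq_zero.1 ((hK.hasDerivAt_deriv_f t).unique (by
    rw [funext h]; exact hasDerivAt_const t (0 : ℝ)))

end LeadingCoeffs.IsAligned

namespace IntegratedEquations

variable {K : LeadingCoeffs} {l H : ℝ} {R Q S g g₂ : ℝ → ℝ}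

theorem aligned_mem (h : IntegratedEquations K H R Q S g g₂) (hK : K.IsAligned l) :
    (fun r => (1 + l * r ^ 2) * R⁽¹⁾ r - (R r / r + Q r)) ∈ inverseCubics := by
  by_cases hA₃ : K.A₃ = 0
  · refine (inverseCubics.smul_mem_iff fun hA₄ => hK.A₃_or_A₄ ⟨hA₃, hA₄⟩).1 ?_
    convert h.separation 3 using 1
    ext r
    simp only [Matrix.cons_val, Pi.smul_apply, smul_eq_mul, hK.C₂]
    ring
  · refine (inverseCubics.smul_mem_iff hA₃).1 ?_
    convert h.separation 2 using 1
    ext r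
    simp only [Matrix.cons_val, Pi.smul_apply, smul_eq_mul, hK.C₁]
    ring

theorem ℓ_eq_of_aligned (h : IntegratedEquations K H R Q S g g₂) (hK : K.IsAligned l)
    {q : Fin 4 → ℝ}
    (hq : ∀ r, 0 < r → (1 + l * r ^ 2) * R⁽¹⁾ r - (R r / r + Q r) = ∑ i, q i / r ^ (i : ℕ))
    (t : ℝ) :
    K.ℓ₁ S g t = K.f t * q 1 ∧ K.ℓ₂ S t = K.f t * q 2 ∧ K.ℓ₃ S t = K.f t * q 3 := by
  have coeffs := eq_zero_of_forall_pos_sum_mul_pow_eq_zero (c := ![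
      K.f t * q 3 - K.ℓ₃ S t, K.f t * q 2 - K.ℓ₂ S t, K.f t * q 1 - K.ℓ₁ S g t,
      K.f t * q 0 - (g₂⁽¹⁾ t - 3 * K.D₀ * S⁽¹⁾ t)]) fun r hr => by
    have lin := h.linear r hr t
    have hqr := hq r hr
    rw [hK.b_eq, hK.c_eq, hK.deriv_deriv_f_eq, deriv_const] at lin
    simp only [Fin.sum_univ_four, Matrix.cons_val_zero, Matrix.cons_val_one, Matrix.cons_val,
      Fin.isValue, Fin.coe_ofNat_eq_mod, Nat.reduceMod] at hqr ⊢
    linear_combination (norm := (field_simp; ring)) r ^ 3 * lin - r ^ 3 * K.f t * hqr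
  have c3 := congrFun coeffs 0
  have c2 := congrFun coeffs 1
  have c1 := congrFun coeffs 2
  simp only [Matrix.cons_val_zero, Matrix.cons_val_one, Matrix.cons_val, Pi.zero_apply] at c3 c2 c1
  exact ⟨by linear_combination -c1, by linear_combination -c2, by linear_combination -c3⟩

end IntegratedEquations

theorem periodic_deriv {φ : ℝ → ℝ} {T : ℝ} (h : Function.Periodic φ T) :
    Function.Periodic φ⁽¹⁾ T := fun t => by
  rw [← deriv_comp_add_const, funext h]

theorem deriv_deriv_deriv_eq_of_deriv_deriv_eq {y : ℝ → ℝ} {a k : ℝ} (hy : ContDiff ℝ ∞ y)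
    (hy₂ : ∀ t, y⁽²⁾ t = a - k * y t) (t : ℝ) : y⁽³⁾ t = -k * y⁽¹⁾ t := by
  rw [funext hy₂]
  exact (((hasDerivAt_deriv hy t).const_mul k).const_sub _).deriv.trans (neg_mul _ _).symm

theorem periodic_of_deriv_deriv_eq_const_sub {y : ℝ → ℝ} {a : ℝ} (hy : ContDiff ℝ ∞ y)
    (hy₂ : ∀ t, y⁽²⁾ t = a - 4 * y t) : Function.Periodic y (2 * π) := by
  have deriv_eq' : deriv (fun t => y t - a / 4) = y⁽¹⁾ := funext fun t => deriv_sub_const _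
  have := periodic_of_deriv_deriv_eq two_ne_zero (y := fun t => y t - a / 4)
    ((hy.differentiable (by simp)).sub_const _)
    (by rw [deriv_eq']; exact (contDiff_deriv hy).differentiable (by simp))
    fun t => by rw [deriv_eq', hy₂]; push_cast; ring
  exact fun t => by simpa using this t

theorem add_two_pi_of_resonance {φ φ' z z' : ℝ → ℝ} {μ : ℝ}
    (hφ : ∀ t, HasDerivAt φ (φ' t) t) (hφ' : ∀ t, HasDerivAt φ' (-φ t) t)
    (hφ'_periodic : Function.Periodic φ' (2 * π)) (hz : ∀ t, HasDerivAt z (z' t) t)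
    (hz' : ∀ t, HasDerivAt z' (μ * φ t - z t) t) (t : ℝ) :
    z (t + 2 * π) = z t - μ * π * φ' t := by
  have hasDerivAt_y (t : ℝ) : HasDerivAt (fun t => z t + μ / 2 * (t * φ' t))
      (z' t + μ / 2 * (φ' t - t * φ t)) t :=
    ((hz t).add (((hasDerivAt_id t).mul (hφ' t)).const_mul _)).congr_deriv (by simp only [id]; ring)
  have hasDerivAt_y' (t : ℝ) : HasDerivAt (deriv fun t => z t + μ / 2 * (t * φ' t))
      (-(z t + μ / 2 * (t * φ' t))) t := by
    rw [funext fun t => (hasDerivAt_y t).deriv]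
    exact ((hz' t).add (((hφ' t).sub ((hasDerivAt_id t).mul (hφ t))).const_mul _)).congr_deriv
      (by simp only [id]; ring)
  have periodic_y := periodic_of_deriv_deriv_eq one_ne_zero
    (fun t => (hasDerivAt_y t).differentiableAt) (fun t => (hasDerivAt_y' t).differentiableAt)
    (fun t => by rw [(hasDerivAt_y' t).deriv]; push_cast; ring) t
  simp only [hφ'_periodic t] at periodic_y
  linear_combination periodic_y

namespace LeadingCoeffs.IsAligned

variable {K : LeadingCoeffs} {l q₁ q₂ q₃ : ℝ} {S g : ℝ → ℝ}

-- For `W = S'' + 4S - 3q₃/2` the hypothesis on `ℓ₃` says that `f' W' = 4 f W`, so `f'⁴ W` is a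
-- constant, which vanishes at the zeros of `f'`.
theorem deriv_deriv_S_eq (hK : K.IsAligned l) (hS : ContDiff ℝ ∞ S)
    (hℓ₃ : ∀ t, K.ℓ₃ S t = K.f t * q₃) (t : ℝ) : S⁽²⁾ t = 3 / 2 * q₃ - 4 * S t := by
  have hasDerivAt_W (t : ℝ) : HasDerivAt (fun t => S⁽²⁾ t + 4 * S t - 3 / 2 * q₃)
      (S⁽³⁾ t + 4 * S⁽¹⁾ t) t :=
    ((hasDerivAt_deriv (contDiff_deriv (contDiff_deriv hS)) t).add
      ((hasDerivAt_deriv hS t).const_mul 4)).sub_const _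
  have ode (t : ℝ) : K.f⁽¹⁾ t * (S⁽³⁾ t + 4 * S⁽¹⁾ t)
      = 4 * K.f t * (S⁽²⁾ t + 4 * S t - 3 / 2 * q₃) := by
    have := hℓ₃ t
    rw [LeadingCoeffs.ℓ₃, hK.deriv_deriv_deriv_f_eq, hK.deriv_deriv_f_eq] at this
    linear_combination -6 * this
  have conserved := eq_of_forall_hasDerivAt_zero
    (φ := fun t => K.f⁽¹⁾ t ^ 4 * (S⁽²⁾ t + 4 * S t - 3 / 2 * q₃)) fun t =>
      (((hK.hasDerivAt_deriv_f t).pow 4).mul (hasDerivAt_W t)).congr_deriv (by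
        simp only [Pi.pow_apply]; push_cast; linear_combination K.f⁽¹⁾ t ^ 3 * ode t)
  obtain ⟨t₀, ht₀⟩ := hK.exists_deriv_f_eq_zero
  have W_eq_zero : S⁽²⁾ t + 4 * S t - 3 / 2 * q₃ = 0 := by
    by_cases ht : K.f⁽¹⁾ t = 0
    · simpa [ht, hK.f_ne_zero_of_deriv_f_eq_zero ht] using ode t
    · simpa [ht, ht₀] using conserved t t₀
  linear_combination W_eq_zero

theorem q₂_eq_zero (hK : K.IsAligned l) (hS : ContDiff ℝ ∞ S)
    (hS₂ : ∀ t, S⁽²⁾ t = 3 / 2 * q₃ - 4 * S t) (hℓ₂ : ∀ t, K.ℓ₂ S t = K.f t * q₂) : q₂ = 0 := by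
  obtain ⟨t, ht⟩ := hK.exists_deriv_f_eq_zero
  have := hℓ₂ t
  rw [LeadingCoeffs.ℓ₂, hK.b_eq, deriv_const, deriv_deriv_deriv_eq_of_deriv_deriv_eq hS hS₂] at this
  exact (mul_eq_zero.1 (by linear_combination -this)).resolve_left
    (hK.f_ne_zero_of_deriv_f_eq_zero ht)

-- The corrected function `g + 5/8 l (f' S' - 2 f (S - 3 q₃/8))` solves `z'' + z = μ f`.
theorem g_add_two_pi (hK : K.IsAligned l) (hS : ContDiff ℝ ∞ S) (hg : ContDiff ℝ ∞ g)
    (hS₂ : ∀ t, S⁽²⁾ t = 3 / 2 * q₃ - 4 * S t) (hℓ₁ : ∀ t, K.ℓ₁ S g t = K.f t * q₁) (t : ℝ) :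
    g (t + 2 * π) = g t - (q₁ - 3 / 4 * l * q₃) * π * K.f⁽¹⁾ t := by
  have hasDerivAt_f := hasDerivAt_deriv K.contDiff_f
  have hasDerivAt_f' := hK.hasDerivAt_deriv_f
  have hasDerivAt_S := hasDerivAt_deriv hS
  have hasDerivAt_S' (t : ℝ) : HasDerivAt S⁽¹⁾ (3 / 2 * q₃ - 4 * S t) t := by
    rw [← hS₂]; exact hasDerivAt_deriv (contDiff_deriv hS) t
  have periodic_S := periodic_of_deriv_deriv_eq_const_sub hS hS₂
  have periodic_z := add_two_pi_of_resonance hasDerivAt_f hasDerivAt_f' hK.periodic_deriv_f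
    (z := fun t => g t + 5 / 8 * l * (K.f⁽¹⁾ t * S⁽¹⁾ t - 2 * K.f t * (S t - 3 / 8 * q₃)))
    (z' := fun t => g⁽¹⁾ t
      + 5 / 8 * l * (-3 * K.f t * S⁽¹⁾ t - 6 * K.f⁽¹⁾ t * (S t - 3 / 8 * q₃)))
    (μ := q₁ - 3 / 4 * l * q₃)
    (fun t => ((hasDerivAt_deriv hg t).add ((((hasDerivAt_f' t).mul (hasDerivAt_S' t)).sub
      (((hasDerivAt_f t).const_mul 2).mul ((hasDerivAt_S t).sub_const _))).const_mul _)).congr_deriv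
      (by ring))
    (fun t => ((hasDerivAt_deriv (contDiff_deriv hg) t).add
      (((((hasDerivAt_f t).const_mul (-3)).mul (hasDerivAt_S' t)).sub (((hasDerivAt_f' t).const_mul
        6).mul ((hasDerivAt_S t).sub_const _))).const_mul _)).congr_deriv (by
        have := hℓ₁ t
        rw [LeadingCoeffs.ℓ₁, hK.deriv_c_eq, hK.c_eq, hS₂] at this
        linear_combination this)) t
  simp only [hK.periodic_f t, hK.periodic_deriv_f t, periodic_S t, periodic_deriv periodic_S t]
    at periodic_z
  linear_combination periodic_z

end LeadingCoeffs.IsAligned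

section RadialEquation

variable {l : ℝ} {z z' : ℝ → ℝ}

theorem exists_eq_const_of_hasDerivAt_zero {φ : ℝ → ℝ} {a : ℝ}
    (hφ : ∀ x, a < x → HasDerivAt φ 0 x) : ∃ k, ∀ x, a < x → φ x = k := by
  simpa using exists_eq_add_const_of_hasDerivAt hφ fun x _ => hasDerivAt_const x (0 : ℝ)

theorem hasDerivAt_one_add_mul_sq (l r : ℝ) : HasDerivAt (fun r => 1 + l * r ^ 2) (2 * l * r) r :=
  (((hasDerivAt_pow 2 r).const_mul l).const_add 1).congr_deriv (by push_cast; ring)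

theorem one_add_mul_sq_pos (hl : 0 ≤ l) (r : ℝ) : 0 < 1 + l * r ^ 2 := by positivity

theorem sqrt_one_add_mul_sq_pos (hl : 0 ≤ l) (r : ℝ) : 0 < √(1 + l * r ^ 2) :=
  sqrt_pos.2 (one_add_mul_sq_pos hl r)

theorem hasDerivAt_sqrt_one_add_mul_sq (hl : 0 ≤ l) (r : ℝ) :
    HasDerivAt (fun r => √(1 + l * r ^ 2)) (l * r / √(1 + l * r ^ 2)) r :=
  ((hasDerivAt_one_add_mul_sq l r).sqrt (one_add_mul_sq_pos hl r).ne').congr_deriv (by ring)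

theorem hasDerivAt_const_div_sqrt_pow (hl : 0 ≤ l) (a : ℝ) (n : ℕ) (r : ℝ) :
    HasDerivAt (fun r => a / √(1 + l * r ^ 2) ^ n)
      (-(n * a * l * r) / √(1 + l * r ^ 2) ^ (n + 2)) r :=
  (HasDerivAt.comp (h₂ := fun x => a / x ^ n) r
    (hasDerivAt_const_div_pow a n (sqrt_one_add_mul_sq_pos hl r).ne')
    (hasDerivAt_sqrt_one_add_mul_sq hl r)).congr_deriv (by ring)

-- The first integral `z² (1 + l r²)³ / r²` vanishes at the singular point `r₀ = 1/√(-l)`.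
theorem eq_zero_of_singular_ode (hl : l < 0) (hz : ∀ r, 0 < r → HasDerivAt z (z' r) r)
    (ode : ∀ r, 0 < r → (1 + l * r ^ 2) * z' r = (1 / r - 2 * l * r) * z r) {r : ℝ} (hr : 0 < r) :
    z r = 0 := by
  obtain ⟨k, first_integral⟩ := exists_eq_const_of_hasDerivAt_zero
    (φ := fun r => z r ^ 2 * (1 + l * r ^ 2) ^ 3 * (1 / r ^ 2)) fun r hr =>
      ((((hz r hr).pow 2).mul ((hasDerivAt_one_add_mul_sq l r).pow 3)).mul
      (hasDerivAt_const_div_pow 1 2 hr.ne')).congr_deriv (by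
        simp only [Pi.pow_apply, Pi.mul_apply]
        linear_combination (norm := (field_simp; ring))
          2 * z r * (1 + l * r ^ 2) ^ 2 / r ^ 2 * ode r hr)
  have singular : 1 + l * (√(-l))⁻¹ ^ 2 = 0 := by
    rw [inv_pow, sq_sqrt (neg_nonneg.2 hl.le)]
    field_simp [hl.ne]
    ring
  have k_eq_zero : k = 0 := by
    rw [← first_integral (√(-l))⁻¹ (inv_pos.2 (sqrt_pos.2 (neg_pos.2 hl))), singular]
    ring
  by_cases hu : 1 + l * r ^ 2 = 0
  · have slope_pos : 0 < 1 / r - 2 * l * r := by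
      have := mul_pos (neg_pos.2 hl) hr
      have := one_div_pos.2 hr
      linarith
    refine (mul_eq_zero.1 ?_).resolve_left slope_pos.ne'
    rw [← ode r hr, hu, zero_mul]
  · simpa [k_eq_zero, hu, hr.ne'] using first_integral r hr

theorem exists_eq_mul_div_sqrt_of_ode (hl : 0 ≤ l) (hz : ∀ r, 0 < r → HasDerivAt z (z' r) r)
    (ode : ∀ r, 0 < r → (1 + l * r ^ 2) * z' r = (1 / r - 2 * l * r) * z r) :
    ∃ κ, ∀ r, 0 < r → z r = κ * r / √(1 + l * r ^ 2) ^ 3 := by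
  obtain ⟨κ, first_integral⟩ := exists_eq_const_of_hasDerivAt_zero
    (φ := fun r => z r * √(1 + l * r ^ 2) ^ 3 * (1 / r ^ 1)) fun r hr =>
      (((hz r hr).mul ((hasDerivAt_sqrt_one_add_mul_sq hl r).pow 3)).mul
      (hasDerivAt_const_div_pow 1 1 hr.ne')).congr_deriv (by
        have := sqrt_one_add_mul_sq_pos hl r
        have s_sq := sq_sqrt (one_add_mul_sq_pos hl r).le
        simp only [Pi.pow_apply, Pi.mul_apply]
        have := ode r hr
        rw [← s_sq] at this
        linear_combination (norm := (field_simp; ring)) √(1 + l * r ^ 2) / r * this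
          - √(1 + l * r ^ 2) / r ^ 2 * z r * s_sq)
  refine ⟨κ, fun r hr => ?_⟩
  have := sqrt_one_add_mul_sq_pos hl r
  rw [← first_integral r hr]
  field_simp

theorem radial_solutions {R R' R'' : ℝ → ℝ} {q : ℝ} (hR : ∀ r, 0 < r → HasDerivAt R (R' r) r)
    (hR' : ∀ r, 0 < r → HasDerivAt R' (R'' r) r)
    (ode : ∀ r, 0 < r → (1 + l * r ^ 2) * R'' r
      = (1 / r - 2 * l * r) * R' r - 3 / 4 * l * q / r ^ 2 - 3 * q / r ^ 4) :
    (∃ a c₀, ∀ r, 0 < r → R r = a * r ^ 2 + c₀ - 3 / 8 * q / r ^ 2) ∨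
    (0 < l ∧ ∃ w c₀, ∀ r, 0 < r → R r = w / √(1 + l * r ^ 2) + c₀ - 3 / 8 * q / r ^ 2) := by
  have hz (r : ℝ) (hr : 0 < r) : HasDerivAt (fun r => R' r - 3 / 4 * q / r ^ 3)
      (R'' r + 9 / 4 * q / r ^ 4) r :=
    ((hR' r hr).sub (hasDerivAt_const_div_pow _ 3 hr.ne')).congr_deriv (by push_cast; ring)
  have ode_z (r : ℝ) (hr : 0 < r) : (1 + l * r ^ 2) * (R'' r + 9 / 4 * q / r ^ 4)
      = (1 / r - 2 * l * r) * (R' r - 3 / 4 * q / r ^ 3) := by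
    linear_combination (norm := (field_simp; ring)) ode r hr
  have polynomial_of_z_eq {κ : ℝ} (h : ∀ r, 0 < r → R' r - 3 / 4 * q / r ^ 3 = κ * r) :
      ∃ a c₀, ∀ r, 0 < r → R r = a * r ^ 2 + c₀ - 3 / 8 * q / r ^ 2 := by
    obtain ⟨c₀, hc₀⟩ := exists_eq_add_const_of_hasDerivAt hR fun r hr =>
      (((hasDerivAt_pow 2 r).const_mul (κ / 2)).sub
        (hasDerivAt_const_div_pow (3 / 8 * q) 2 hr.ne')).congr_deriv (by
          push_cast; linear_combination -h r hr)
    exact ⟨κ / 2, c₀, fun r hr => by rw [hc₀ r hr]; simp only [Pi.sub_apply]; ring⟩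
  rcases lt_or_ge l 0 with hl | hl
  · exact .inl (polynomial_of_z_eq (κ := 0) fun r hr =>
      (eq_zero_of_singular_ode hl hz ode_z hr).trans (zero_mul r).symm)
  obtain ⟨κ, hκ⟩ := exists_eq_mul_div_sqrt_of_ode hl hz ode_z
  rcases hl.eq_or_lt with rfl | hl
  · exact .inl (polynomial_of_z_eq (κ := κ) fun r hr => by simpa using hκ r hr)
  · obtain ⟨c₀, hc₀⟩ := exists_eq_add_const_of_hasDerivAt hR fun r hr =>
      ((hasDerivAt_const_div_sqrt_pow hl.le (-(κ / l)) 1 r).sub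
        (hasDerivAt_const_div_pow (3 / 8 * q) 2 hr.ne')).congr_deriv (by
          push_cast; linear_combination (norm := (field_simp; ring)) -hκ r hr)
    exact .inr ⟨hl, -(κ / l), c₀, fun r hr => by
      rw [hc₀ r hr]; simp only [Pi.sub_apply, pow_one]; ring⟩

end RadialEquation

namespace IntegratedEquations

variable {K : LeadingCoeffs} {l H : ℝ} {R Q S g g₂ : ℝ → ℝ} {q : Fin 4 → ℝ}

theorem hasDerivAt_deriv_R (h : IntegratedEquations K H R Q S g g₂) {r : ℝ} (hr : 0 < r) :
    HasDerivAt R⁽¹⁾ (R⁽²⁾ r) r :=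
  (h.contDiffOn_deriv_R.differentiableOn (by simp)).hasDerivAt (Ioi_mem_nhds hr)

theorem radial_ode_of_aligned (h : IntegratedEquations K H R Q S g g₂)
    (hq : ∀ r, 0 < r → (1 + l * r ^ 2) * R⁽¹⁾ r - (R r / r + Q r) = ∑ i, q i / r ^ (i : ℕ))
    {r : ℝ} (hr : 0 < r) :
    (1 + l * r ^ 2) * R⁽²⁾ r
      = (1 / r - 2 * l * r) * R⁽¹⁾ r - q 1 / r ^ 2 - 2 * q 2 / r ^ 3 - 3 * q 3 / r ^ 4 := by
  have lhs := (((hasDerivAt_one_add_mul_sq l r).mul (h.hasDerivAt_deriv_R hr)).sub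
    (((h.hasDerivAt_R hr).div (hasDerivAt_id r) hr.ne').add (h.hasDerivAt_Q r hr)))
  have rhs := HasDerivAt.fun_sum (u := Finset.univ) fun i _ =>
    hasDerivAt_const_div_pow (q i) (i : Fin 4) hr.ne'
  have := lhs.deriv.symm.trans (deriv_eq_of_eqOn_Ioi hq rhs hr)
  simp only [id, Fin.sum_univ_four, Fin.isValue, Fin.coe_ofNat_eq_mod, Nat.reduceMod] at this
  linear_combination (norm := (push_cast; field_simp; ring)) this

theorem angular_solutions_of_aligned (h : IntegratedEquations K H R Q S g g₂)
    (hK : K.IsAligned l)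
    (hq : ∀ r, 0 < r → (1 + l * r ^ 2) * R⁽¹⁾ r - (R r / r + Q r) = ∑ i, q i / r ^ (i : ℕ)) :
    (∀ t, S⁽²⁾ t = 3 / 2 * q 3 - 4 * S t) ∧ q 2 = 0 ∧
      ∀ t, g (t + 2 * π) = g t - (q 1 - 3 / 4 * l * q 3) * π * K.f⁽¹⁾ t := by
  have ℓ_eq := h.ℓ_eq_of_aligned hK hq
  have hS₂ := hK.deriv_deriv_S_eq h.contDiff_S fun t => (ℓ_eq t).2.2
  exact ⟨hS₂, hK.q₂_eq_zero h.contDiff_S hS₂ fun t => (ℓ_eq t).2.1,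
    hK.g_add_two_pi h.contDiff_S h.contDiff_g hS₂ fun t => (ℓ_eq t).1⟩

-- Only `g` and `g₂` fail to be periodic, so subtracting the quadratic equation at `t` from the one
-- at `t + 2π` leaves `(g (t + 2π) - g t) R' = O(1/r²)`.
theorem sq_mul_deriv_mem_of_aligned (h : IntegratedEquations K H R Q S g g₂)
    (hK : K.IsAligned l) (hS : Function.Periodic S (2 * π)) {t : ℝ} (hg : g (t + 2 * π) ≠ g t) :
    (fun r => r ^ 2 * R⁽¹⁾ r) ∈ inverseCubics := by
  refine (inverseCubics.smul_mem_iff (sub_ne_zero.2 hg)).1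
    ⟨![-(K.n₂ H S g₂ (t + 2 * π) - K.n₂ H S g₂ t), -(K.n₃ H S g (t + 2 * π) - K.n₃ H S g t), 0, 0],
      fun r hr => ?_⟩
  have quad := h.quadratic r hr t
  have quad_shift := h.quadratic r hr (t + 2 * π)
  have hS' := periodic_deriv hS
  have hS'' := periodic_deriv hS'
  simp only [LeadingCoeffs.n₄, LeadingCoeffs.n₅, hK.deriv_deriv_deriv_f_eq] at quad quad_shift
  simp only [hK.b_eq, hK.c_eq, deriv_const, hK.deriv_deriv_f_eq, hK.periodic_f t,
    hK.periodic_deriv_f t, hS t, hS' t, hS'' t, periodic_deriv hS'' t] at quad quad_shift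
  simp only [Pi.smul_apply, smul_eq_mul, Fin.sum_univ_four, Matrix.cons_val_zero,
    Matrix.cons_val_one, Matrix.cons_val, Fin.isValue, Fin.coe_ofNat_eq_mod, Nat.reduceMod]
  linear_combination (norm := (field_simp; ring)) r ^ 2 * (quad_shift - quad)

end IntegratedEquations

section SquareRootPotential

open Polynomial in
theorem eq_zero_of_eval_add_sqrt_mul_eval {l k m₀ m₁ m₂ m₃ : ℝ} (hl : 0 < l) {Q : ℝ[X]}
    (h : ∀ r, 0 < r → (1 + l * r ^ 2) ^ 2 * ((1 + l * r ^ 2) ^ 2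
        * (m₀ + m₁ * r + m₂ * r ^ 2 + m₃ * r ^ 3) - k * r ^ 6)
      + √(1 + l * r ^ 2) * Q.eval r = 0) : k = 0 := by
  have rational_part := eq_zero_of_eval_add_sqrt_mul_eval_eq_zero hl (Q := Q)
    (P := (1 + C l * X ^ 2) ^ 2 * ((1 + C l * X ^ 2) ^ 2
      * (C m₀ + C m₁ * X + C m₂ * X ^ 2 + C m₃ * X ^ 3) - C k * X ^ 6)) fun r hr => by
    simpa only [eval_add, eval_sub, eval_mul, eval_pow, eval_one, eval_C, eval_X] using h r hr
  have coeffs := eq_zero_of_forall_pos_sum_mul_pow_eq_zero (c := ![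
      m₀, m₁, m₂ + 2 * l * m₀, m₃ + 2 * l * m₁, 2 * l * m₂ + l ^ 2 * m₀,
      2 * l * m₃ + l ^ 2 * m₁, l ^ 2 * m₂ - k, l ^ 2 * m₃]) fun r _ => by
    have : (1 + l * r ^ 2) ^ 2 ≠ 0 := pow_ne_zero 2 (one_add_mul_sq_pos hl.le r).ne'
    have := (mul_eq_zero.1 (by simpa using congrArg (eval r) rational_part)).resolve_left this
    simp only [Fin.sum_univ_succ, Fin.sum_univ_zero, Matrix.cons_val_zero, Matrix.cons_val_succ,
      Fin.val_succ, Fin.val_zero, Fin.isValue]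
    linear_combination this
  have m₀_eq_zero : m₀ = 0 := congrFun coeffs 0
  have m₂_eq_zero : m₂ = 0 := by simpa [m₀_eq_zero] using congrFun coeffs 2
  simpa [m₂_eq_zero] using congrFun coeffs 6

variable {R : ℝ → ℝ} {l w c₀ a₂ r : ℝ}

theorem deriv_of_eq_div_sqrt (hl : 0 ≤ l)
    (hR : ∀ r, 0 < r → R r = w / √(1 + l * r ^ 2) + c₀ + a₂ / r ^ 2) (hr : 0 < r) :
    R⁽¹⁾ r = -(w * l) / √(1 + l * r ^ 2) ^ 3 * r - 2 * a₂ / r ^ 3 :=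
  deriv_eq_of_eqOn_Ioi (fun r hr => by rw [hR r hr, ← pow_one √(1 + l * r ^ 2)]; rfl)
    ((((hasDerivAt_const_div_sqrt_pow hl w 1 r).add_const c₀).add
      (hasDerivAt_const_div_pow a₂ 2 hr.ne')).congr_deriv (by push_cast; ring)) hr

theorem deriv_deriv_of_eq_div_sqrt (hl : 0 ≤ l)
    (hR : ∀ r, 0 < r → R r = w / √(1 + l * r ^ 2) + c₀ + a₂ / r ^ 2) (hr : 0 < r) :
    R⁽²⁾ r = -(w * l) / √(1 + l * r ^ 2) ^ 3
      + 3 * w * l ^ 2 / √(1 + l * r ^ 2) ^ 5 * r ^ 2 + 6 * a₂ / r ^ 4 :=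
  deriv_eq_of_eqOn_Ioi (fun r hr => deriv_of_eq_div_sqrt hl hR hr)
    ((((hasDerivAt_const_div_sqrt_pow hl _ 3 r).mul (hasDerivAt_id r)).sub
      (hasDerivAt_const_div_pow _ 3 hr.ne')).congr_deriv (by simp only [id]; push_cast; ring)) hr

theorem deriv_deriv_deriv_of_eq_div_sqrt (hl : 0 ≤ l)
    (hR : ∀ r, 0 < r → R r = w / √(1 + l * r ^ 2) + c₀ + a₂ / r ^ 2) (hr : 0 < r) :
    R⁽³⁾ r = 9 * w * l ^ 2 / √(1 + l * r ^ 2) ^ 5 * r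
      - 15 * w * l ^ 3 / √(1 + l * r ^ 2) ^ 7 * r ^ 3 - 24 * a₂ / r ^ 5 :=
  deriv_eq_of_eqOn_Ioi (fun r hr => deriv_deriv_of_eq_div_sqrt hl hR hr)
    ((((hasDerivAt_const_div_sqrt_pow hl _ 3 r).add
      ((hasDerivAt_const_div_sqrt_pow hl _ 5 r).mul (hasDerivAt_pow 2 r))).add
      (hasDerivAt_const_div_pow _ 4 hr.ne')).congr_deriv (by push_cast; ring)) hr

variable {K : LeadingCoeffs} {H : ℝ} {Q S g g₂ : ℝ → ℝ}

open Polynomial in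
-- At a zero of `f'` the term `3 f R R'` contributes `-3 f w² l r / (1 + l r²)²` to the part of the
-- quadratic equation that is rational in `r`; all its other terms there are multiples of `r^(-k)`.
theorem IntegratedEquations.eq_zero_of_eq_div_sqrt (h : IntegratedEquations K H R Q S g g₂)
    (hK : K.IsAligned l) (hl : 0 < l)
    (hR : ∀ r, 0 < r → R r = w / √(1 + l * r ^ 2) + c₀ + a₂ / r ^ 2) : w = 0 := by
  obtain ⟨t, ht⟩ := hK.exists_deriv_f_eq_zero
  have hf := hK.f_ne_zero_of_deriv_f_eq_zero ht
  have := eq_zero_of_eval_add_sqrt_mul_eval hl (k := 3 * K.f t * w ^ 2 * l)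
    (m₀ := K.n₅ H S t - 6 * K.f t * a₂ ^ 2 - 12 * K.f t * S t * a₂ + 16 * H * K.f t * a₂)
    (m₁ := K.n₄ H S t + 4 * K.B₀ * S⁽¹⁾ t * a₂)
    (m₂ := K.n₃ H S g t - 6 * K.f t * c₀ * a₂ - 2 * a₂ * g t - 6 * K.f t * S t * c₀
      - 4 * H * K.f t * l * a₂)
    (m₃ := K.n₂ H S g₂ t + 2 * K.B₀ * S⁽¹⁾ t * c₀)
    (Q := let σ := 1 + C l * X ^ 2
      C w * (-C (6 * K.f t * (a₂ + S t)) * X ^ 2 * σ ^ 3 + C (2 * K.B₀ * S⁽¹⁾ t) * X ^ 3 * σ ^ 3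
        - C l * (C (3 * K.f t * c₀ + g t) * X ^ 6 - C (K.B₀ * S⁽¹⁾ t) * X ^ 5
          + C (3 * K.f t * (a₂ + S t)) * X ^ 4) * σ ^ 2
        - C (H * K.f t * l) * (9 * C l * X ^ 6 * σ - 15 * C l ^ 2 * X ^ 8
          + X ^ 4 * (3 * C l * X ^ 2 - σ) * σ ^ 2 + X ^ 4 * (1 - C l * X ^ 2) * σ ^ 2)))
    fun r hr => by
    have quad := h.quadratic r hr t
    have s_pos := sqrt_one_add_mul_sq_pos hl.le r
    have s_sq := sq_sqrt (one_add_mul_sq_pos hl.le r).le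
    rw [deriv_deriv_deriv_of_eq_div_sqrt hl.le hR hr, deriv_deriv_of_eq_div_sqrt hl.le hR hr,
      deriv_of_eq_div_sqrt hl.le hR hr, hR r hr, hK.deriv_deriv_f_eq, hK.b_eq, hK.c_eq,
      deriv_const, ht] at quad
    simp only [eval_add, eval_sub, eval_neg, eval_mul, eval_pow, eval_one, eval_C, eval_X,
      eval_ofNat]
    generalize √(1 + l * r ^ 2) = s at *
    rw [← s_sq]
    linear_combination (norm := (field_simp; ring)) r ^ 5 * s ^ 8 * quad
      - H * K.f t * r ^ 4 * w * l * s ^ 3 * (3 * l * r ^ 2 - s ^ 2) * s_sq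
  simpa [hf, hl.ne'] using this

end SquareRootPotential

namespace IntegratedEquations

variable {K : LeadingCoeffs} {l H : ℝ} {R Q S g g₂ : ℝ → ℝ}

theorem isCoulombOrOscillator_of_aligned (h : IntegratedEquations K H R Q S g g₂)
    (hK : K.IsAligned l) : IsCoulombOrOscillator K R := by
  obtain ⟨q, hq⟩ := h.aligned_mem hK
  obtain ⟨hS₂, hq₂, hg⟩ := h.angular_solutions_of_aligned hK hq
  obtain ⟨t₀, ht₀⟩ := hK.exists_deriv_f_eq_zero
  have hf := hK.f_ne_zero_of_deriv_f_eq_zero ht₀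
  by_cases hμ : q 1 - 3 / 4 * l * q 3 = 0
  · rcases radial_solutions (fun r hr => h.hasDerivAt_R hr) (fun r hr => h.hasDerivAt_deriv_R hr)
      (l := l) (q := q 3) fun r hr => by
        rw [h.radial_ode_of_aligned hq hr, hq₂, sub_eq_zero.1 hμ]; ring
      with ⟨a, c₀, hR⟩ | ⟨hl, w, c₀, hR⟩
    · exact h.isCoulombOrOscillator_of_f_ne_zero hK.A₁ hK.A₂ hf (a := a) (c₀ := c₀) (a₁ := 0)
        (a₂ := -(3 / 8 * q 3)) (a₃ := 0) (a₄ := 0) fun r hr => by rw [hR r hr]; ring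
    · obtain rfl := h.eq_zero_of_eq_div_sqrt hK hl (w := w) (c₀ := c₀) (a₂ := -(3 / 8 * q 3))
        fun r hr => by rw [hR r hr]; ring
      exact isCoulombOrOscillator_of_eq_coulomb c₀ 0 (-(3 / 8 * q 3)) fun r hr => by
        rw [hR r hr]; ring
  · obtain ⟨t, ht⟩ := hK.exists_deriv_f_ne_zero
    have g_ne : g (t + 2 * π) ≠ g t := by simp [hg, hμ, ht, pi_ne_zero]
    have periodic_S := periodic_of_deriv_deriv_eq_const_sub h.contDiff_S hS₂
    obtain ⟨c₀, a₁, a₂, a₃, a₄, hR⟩ := exists_eq_of_sq_mul_deriv_mem_inverseCubics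
      (fun r hr => h.hasDerivAt_R hr) (h.sq_mul_deriv_mem_of_aligned hK periodic_S g_ne)
    exact h.isCoulombOrOscillator_of_f_ne_zero hK.A₁ hK.A₂ hf (a := 0) (c₀ := c₀) (a₁ := a₁)
      (a₂ := a₂) (a₃ := a₃) (a₄ := a₄) fun r hr => by rw [hR r hr]; ring

end IntegratedEquations

theorem LeadingCoeffs.exists_isAligned {K : LeadingCoeffs} (hA : K.A₁ = 0 ∧ K.A₂ = 0)
    (hA' : ¬(K.A₃ = 0 ∧ K.A₄ = 0)) (hB : K.B₁ = 0 ∧ K.B₂ = 0)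
    (hAC : K.A₃ * K.C₂ - K.A₄ * K.C₁ = 0) : ∃ l, K.IsAligned l := by
  by_cases hA₃ : K.A₃ = 0
  · have hA₄ : K.A₄ ≠ 0 := fun hA₄ => hA' ⟨hA₃, hA₄⟩
    have hC₁ : K.C₁ = 0 := by simpa [hA₃, hA₄] using hAC
    exact ⟨K.C₂ / K.A₄, hA.1, hA.2, hA', hB.1, hB.2, by simp [hA₃, hC₁], by field_simp⟩
  · exact ⟨K.C₁ / K.A₃, hA.1, hA.2, hA', hB.1, hB.2, by field_simp, by
      field_simp; linear_combination hAC⟩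

namespace IntegratedEquations

variable {K : LeadingCoeffs} {H : ℝ} {R Q S g g₂ : ℝ → ℝ}

theorem isCoulombOrOscillator_of_third_harmonic (h : IntegratedEquations K H R Q S g g₂)
    (hA : ¬(K.A₁ = 0 ∧ K.A₂ = 0)) : IsCoulombOrOscillator K R := by
  obtain ⟨a, d, c₀, a₁, a₂, hR⟩ := exists_eq_of_third_harmonic_mem_inverseCubics
    (fun r hr => h.hasDerivAt_R hr) h.hasDerivAt_Q (h.third_harmonic_mem hA)
  obtain ⟨t, hf⟩ := K.exists_f_ne_zero fun hA' => hA ⟨hA'.1, hA'.2.1⟩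
  obtain ⟨rfl, rfl⟩ := h.eq_zero_of_f_ne_zero hf hR
  exact isCoulombOrOscillator_of_eq_coulomb c₀ a₁ a₂ fun r hr => by rw [hR r hr]; ring

theorem isCoulombOrOscillator_of_second_harmonic (h : IntegratedEquations K H R Q S g g₂)
    (hA : K.A₁ = 0 ∧ K.A₂ = 0) (hB : ¬(K.B₁ = 0 ∧ K.B₂ = 0)) : IsCoulombOrOscillator K R := by
  obtain ⟨a, c₀, a₁, a₂, a₃, hR⟩ := exists_eq_of_mul_deriv_sub_mem_inverseCubics
    (fun r hr => h.hasDerivAt_R hr) (h.second_harmonic_mem hB)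
  have hR' (r : ℝ) (hr : 0 < r) :
      R r = a * r ^ 2 + c₀ + a₁ / r + a₂ / r ^ 2 + a₃ / r ^ 3 + 0 / r ^ 4 := by
    rw [hR r hr, zero_div, add_zero]
  by_cases hf : ∃ t, K.f t ≠ 0
  · obtain ⟨t, hf⟩ := hf
    exact h.isCoulombOrOscillator_of_f_ne_zero hA.1 hA.2 hf hR'
  · exact h.isCoulombOrOscillator_of_f_eq_zero_of_b hA.1 hA.2 (funext (by simpa using hf)) hB hR'

theorem isCoulombOrOscillator_of_first_harmonic (h : IntegratedEquations K H R Q S g g₂)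
    (hA : K.A₁ = 0 ∧ K.A₂ = 0) (hB : K.B₁ = 0 ∧ K.B₂ = 0)
    (hC : (K.A₃ = 0 ∧ K.A₄ = 0) → ¬(K.C₁ = 0 ∧ K.C₂ = 0)) : IsCoulombOrOscillator K R := by
  by_cases hA' : K.A₃ = 0 ∧ K.A₄ = 0
  · obtain ⟨c₀, a₁, a₂, a₃, a₄, hR⟩ := exists_eq_of_sq_mul_deriv_mem_inverseCubics
      (fun r hr => h.hasDerivAt_R hr) (h.sq_mul_deriv_mem_of_A₃_A₄ hA'.1 hA'.2 (hC hA'))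
    exact h.isCoulombOrOscillator_of_f_eq_zero_of_c hA.1 hA.2
      (by ext t; simp [LeadingCoeffs.f, hA, hA']) hB (hC hA') (a := 0)
      fun r hr => by rw [hR r hr, zero_mul, zero_add]
  by_cases hAC : K.A₃ * K.C₂ - K.A₄ * K.C₁ = 0
  · obtain ⟨l, hK⟩ := LeadingCoeffs.exists_isAligned hA hA' hB hAC
    exact h.isCoulombOrOscillator_of_aligned hK
  · obtain ⟨c₀, a₁, a₂, a₃, a₄, hR⟩ := exists_eq_of_sq_mul_deriv_mem_inverseCubics
      (fun r hr => h.hasDerivAt_R hr) (h.sq_mul_deriv_mem hAC)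
    obtain ⟨t, hf⟩ := K.exists_f_ne_zero fun hA'' => hA' hA''.2.2
    exact h.isCoulombOrOscillator_of_f_ne_zero hA.1 hA.2 hf (a := 0)
      fun r hr => by rw [hR r hr, zero_mul, zero_add]

theorem isCoulombOrOscillator (h : IntegratedEquations K H R Q S g g₂)
    (hK : ¬(K.A₁ = 0 ∧ K.A₂ = 0 ∧ K.A₃ = 0 ∧ K.A₄ = 0 ∧ K.B₁ = 0 ∧ K.B₂ = 0 ∧
      K.C₁ = 0 ∧ K.C₂ = 0)) :
    IsCoulombOrOscillator K R := by
  by_cases hA : K.A₁ = 0 ∧ K.A₂ = 0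
  · by_cases hB : K.B₁ = 0 ∧ K.B₂ = 0
    · exact h.isCoulombOrOscillator_of_first_harmonic hA hB fun hA' hC => hK
        ⟨hA.1, hA.2, hA'.1, hA'.2, hB.1, hB.2, hC⟩
    · exact h.isCoulombOrOscillator_of_second_harmonic hA hB
  · exact h.isCoulombOrOscillator_of_third_harmonic hA

end IntegratedEquations

/-- For a potential `V(r,θ) = R(r) + S(θ)/r²` separating in polar coordinates,
if the determining equations (E1)–(E4) for a third order integral of motion
hold for all `r > 0` and all `θ`, then either all the leading constants
`A₁, A₂, A₃, A₄, B₁, B₂, C₁, C₂` vanish (and `R` is unrestricted), or, up to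
terms `c₀ + c₂/r²` that can be absorbed into the angular part, `R(r) = a₃/r`
(Coulomb), `R(r) = a₄r²` (harmonic, requiring `C₁ = C₂ = 0`), or `R = 0`. -/
theorem radial_part_classification
    (ℏ A₁ A₂ A₃ A₄ B₀ B₁ B₂ C₁ C₂ D₀ : ℝ) (R S : ℝ → ℝ) (G₁ G₂ : ℝ → ℝ → ℝ)
    (hR : ContDiffOn ℝ (⊤ : ℕ∞) R (Set.Ioi 0)) (hS : ContDiff ℝ (⊤ : ℕ∞) S)
    (hG₁ : ContDiffOn ℝ (⊤ : ℕ∞) (Function.uncurry G₁) (Set.Ioi 0 ×ˢ Set.univ))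
    (hG₂ : ContDiffOn ℝ (⊤ : ℕ∞) (Function.uncurry G₂) (Set.Ioi 0 ×ˢ Set.univ))
    -- (E1), with the partial derivatives of `V(r,θ) = R(r) + S(θ)/r²`
    -- written out in terms of the derivatives of `R` and `S`:
    -- `V_r = R′ − 2S/r³`, `V_θ = S′/r²`, `V_rr = R″ + 6S/r⁴`, `V_rθ = −2S′/r³`,
    -- `V_θθ = S″/r²`, `V_rrr = R⁽³⁾ − 24S/r⁵`, `V_rrθ = 6S′/r⁴`,
    -- `V_rθθ = −2S″/r³`, `V_θθθ = S⁽³⁾/r²`.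
    (hE1 : ∀ r ∈ Set.Ioi (0 : ℝ), ∀ θ : ℝ,
      G₁ r θ * (deriv R r - 2 * S θ / r ^ 3) + G₂ r θ * (deriv S θ / r ^ 2)
        = ℏ ^ 2 / 4 *
          (F₁ A₁ A₂ A₃ A₄ θ * (iteratedDeriv 3 R r - 24 * S θ / r ^ 5)
            + F₂ A₁ A₂ A₃ A₄ B₀ B₁ B₂ r θ * (6 * deriv S θ / r ^ 4)
            + F₃ A₁ A₂ A₃ A₄ B₁ B₂ C₁ C₂ r θ * (-2 * iteratedDeriv 2 S θ / r ^ 3)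
            + F₄ A₁ A₂ A₃ A₄ B₀ B₁ B₂ C₁ C₂ D₀ r θ * (iteratedDeriv 3 S θ / r ^ 2)
            + r * F₃ A₁ A₂ A₃ A₄ B₁ B₂ C₁ C₂ r θ * (iteratedDeriv 2 R r + 6 * S θ / r ^ 4)
            + (3 * r * F₄ A₁ A₂ A₃ A₄ B₀ B₁ B₂ C₁ C₂ D₀ r θ
                - (2 / r) * F₂ A₁ A₂ A₃ A₄ B₀ B₁ B₂ r θ) * (-2 * deriv S θ / r ^ 3)
            - (2 / r) * F₃ A₁ A₂ A₃ A₄ B₁ B₂ C₁ C₂ r θ * (iteratedDeriv 2 S θ / r ^ 2)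
            + (-F₃ A₁ A₂ A₃ A₄ B₁ B₂ C₁ C₂ r θ + 2 * C₁ * cos θ + 2 * C₂ * sin θ)
                * (deriv R r - 2 * S θ / r ^ 3)
            + (-2 * F₄ A₁ A₂ A₃ A₄ B₀ B₁ B₂ C₁ C₂ D₀ r θ
                + (2 / r ^ 2) * F₂ A₁ A₂ A₃ A₄ B₀ B₁ B₂ r θ + 8 * D₀
                + (-2 * C₁ * sin θ + 2 * C₂ * cos θ) / r) * (deriv S θ / r ^ 2)))
    -- (E2)
    (hE2 : ∀ r ∈ Set.Ioi (0 : ℝ), ∀ θ : ℝ,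
      deriv (fun r' => G₁ r' θ) r
        = 3 * F₁ A₁ A₂ A₃ A₄ θ * (deriv R r - 2 * S θ / r ^ 3)
          + F₂ A₁ A₂ A₃ A₄ B₀ B₁ B₂ r θ * (deriv S θ / r ^ 2))
    -- (E3)
    (hE3 : ∀ r ∈ Set.Ioi (0 : ℝ), ∀ θ : ℝ,
      (1 / r ^ 2) * deriv (fun θ' => G₂ r θ') θ
        = F₃ A₁ A₂ A₃ A₄ B₁ B₂ C₁ C₂ r θ * (deriv R r - 2 * S θ / r ^ 3)
          + 3 * F₄ A₁ A₂ A₃ A₄ B₀ B₁ B₂ C₁ C₂ D₀ r θ * (deriv S θ / r ^ 2)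
          - G₁ r θ / r ^ 3)
    -- (E4)
    (hE4 : ∀ r ∈ Set.Ioi (0 : ℝ), ∀ θ : ℝ,
      deriv (fun r' => G₂ r' θ) r
        = 2 * (F₂ A₁ A₂ A₃ A₄ B₀ B₁ B₂ r θ * (deriv R r - 2 * S θ / r ^ 3)
            + F₃ A₁ A₂ A₃ A₄ B₁ B₂ C₁ C₂ r θ * (deriv S θ / r ^ 2))
          - (1 / r ^ 2) * deriv (fun θ' => G₁ r θ') θ) :
    (A₁ = 0 ∧ A₂ = 0 ∧ A₃ = 0 ∧ A₄ = 0 ∧ B₁ = 0 ∧ B₂ = 0 ∧ C₁ = 0 ∧ C₂ = 0) ∨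
    (∃ a₃ a₄ c₀ c₂ : ℝ,
      (∀ r ∈ Set.Ioi (0 : ℝ), R r = a₃ / r + a₄ * r ^ 2 + c₀ + c₂ / r ^ 2) ∧
      a₃ * a₄ = 0 ∧
      (a₄ ≠ 0 → C₁ = 0 ∧ C₂ = 0)) := by
  have h : DeterminingEquations ⟨A₁, A₂, A₃, A₄, B₀, B₁, B₂, C₁, C₂, D₀⟩ ℏ R S G₁ G₂ :=
    ⟨hR, hS, hG₁, hG₂, hE1, hE2, hE3, hE4⟩
  obtain ⟨Q, g, g₂, h⟩ := h.exists_integratedEquations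
  exact or_iff_not_imp_left.2 h.isCoulombOrOscillator
end

section
/- Let ℏ ≠ 0 and ξ₀ be real constants, let I ⊆ ℝ be an open interval, and let S : I → ℝ be three times continuously differentiable with ℏ²S⁽³⁾(θ) = 12S(θ)S′(θ) + 4ξ₀S′(θ) for all θ ∈ I. Then there exist real constants b and c such that ℏ²(S′(θ))² = 4S(θ)³ + 4ξ₀S(θ)² + bS(θ) + c for all θ ∈ I; consequently, setting T(θ) = S(θ) + ξ₀/3, there exist real constants t₂ and t₃ such that ℏ²(T′(θ))² = 4T(θ)³ − t₂T(θ) − t₃ for all θ ∈ I. -/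
/-! The equation `ħ² S‴ = (12 S + 4 ξ₀) S′` is an exact derivative, so that
`ħ² S″ = 6 S² + 4 ξ₀ S + k`. This is Newton's equation for `S`; multiplying it by `2 S′` makes it
exact once more, and conservation of energy gives `ħ² (S′)² = 4 S³ + 4 ξ₀ S² + 2 k S + c`.
The translation `T = S + ξ₀ / 3` removes the quadratic term of this cubic. -/

section FirstIntegrals

variable {𝕜 : Type*} [RCLike 𝕜] {I : Set 𝕜}

lemma exists_eq_add_const_of_hasDerivAt_eq {E : Type*} [NormedAddCommGroup E] [NormedSpace 𝕜 E]
    {f g f' : 𝕜 → E} (hI : IsOpen I) (hI' : IsPreconnected I)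
    (hf : ∀ x ∈ I, HasDerivAt f (f' x) x) (hg : ∀ x ∈ I, HasDerivAt g (f' x) x) :
    ∃ c, ∀ x ∈ I, f x = g x + c :=
  hI.exists_eq_add_of_deriv_eq hI'
    (fun x hx => (hf x hx).differentiableAt.differentiableWithinAt)
    (fun x hx => (hg x hx).differentiableAt.differentiableWithinAt)
    (fun x hx => (hf x hx).deriv.trans (hg x hx).deriv.symm)

variable {a : 𝕜} {F f f' S S' S'' S''' : 𝕜 → 𝕜}

lemma exists_mul_sq_eq_of_newton (hI : IsOpen I) (hI' : IsPreconnected I)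
    (hS : ∀ x ∈ I, HasDerivAt S (S' x) x) (hS' : ∀ x ∈ I, HasDerivAt S' (S'' x) x)
    (hF : ∀ x ∈ I, HasDerivAt F (f (S x)) (S x)) (hode : ∀ x ∈ I, a * S'' x = f (S x)) :
    ∃ c, ∀ x ∈ I, a * S' x ^ 2 = 2 * F (S x) + c := by
  have kinetic : ∀ x ∈ I, HasDerivAt (fun y => a * S' y ^ 2) (2 * (f (S x) * S' x)) x :=
    fun x hx => (((hS' x hx).pow 2).const_mul a).congr_deriv <| by
      push_cast
      linear_combination 2 * S' x * hode x hx
  have potential : ∀ x ∈ I, HasDerivAt (fun y => 2 * F (S y)) (2 * (f (S x) * S' x)) x :=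
    fun x hx => ((hF x hx).comp x (hS x hx)).const_mul 2
  exact exists_eq_add_const_of_hasDerivAt_eq hI hI' kinetic potential

lemma exists_mul_sq_eq_of_deriv_newton (hI : IsOpen I) (hI' : IsPreconnected I)
    (hS : ∀ x ∈ I, HasDerivAt S (S' x) x) (hS' : ∀ x ∈ I, HasDerivAt S' (S'' x) x)
    (hS'' : ∀ x ∈ I, HasDerivAt S'' (S''' x) x)
    (hF : ∀ x ∈ I, HasDerivAt F (f (S x)) (S x)) (hf : ∀ x ∈ I, HasDerivAt f (f' (S x)) (S x))
    (hode : ∀ x ∈ I, a * S''' x = f' (S x) * S' x) :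
    ∃ k c, ∀ x ∈ I, a * S' x ^ 2 = 2 * (F (S x) + k * S x) + c := by
  obtain ⟨k, newton⟩ : ∃ k, ∀ x ∈ I, a * S'' x = f (S x) + k :=
    exists_eq_add_const_of_hasDerivAt_eq hI hI'
      (fun x hx => ((hS'' x hx).const_mul a).congr_deriv (hode x hx))
      (fun x hx => (hf x hx).comp x (hS x hx))
  have primitive : ∀ x ∈ I, HasDerivAt (fun s => F s + k * s) (f (S x) + k) (S x) :=
    fun x hx => (hF x hx).add (hasDerivAt_const_mul k)
  exact ⟨k, exists_mul_sq_eq_of_newton (f := fun s => f s + k) hI hI' hS hS' primitive newton⟩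

lemma exists_mul_sq_eq_cubic {ξ : 𝕜} (hI : IsOpen I) (hI' : IsPreconnected I)
    (hS : ∀ x ∈ I, HasDerivAt S (S' x) x) (hS' : ∀ x ∈ I, HasDerivAt S' (S'' x) x)
    (hS'' : ∀ x ∈ I, HasDerivAt S'' (S''' x) x)
    (hode : ∀ x ∈ I, a * S''' x = 12 * S x * S' x + 4 * ξ * S' x) :
    ∃ b c, ∀ x ∈ I, a * S' x ^ 2 = 4 * S x ^ 3 + 4 * ξ * S x ^ 2 + b * S x + c := by
  have hF (s : 𝕜) : HasDerivAt (fun s => 2 * s ^ 3 + 2 * ξ * s ^ 2) (6 * s ^ 2 + 4 * ξ * s) s :=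
    (((hasDerivAt_pow 3 s).const_mul 2).add ((hasDerivAt_pow 2 s).const_mul (2 * ξ))).congr_deriv
      (by push_cast; ring)
  have hf (s : 𝕜) : HasDerivAt (fun s => 6 * s ^ 2 + 4 * ξ * s) (12 * s + 4 * ξ) s :=
    (((hasDerivAt_pow 2 s).const_mul 6).add (hasDerivAt_const_mul (4 * ξ))).congr_deriv
      (by push_cast; ring)
  obtain ⟨k, c, energy⟩ := exists_mul_sq_eq_of_deriv_newton (f' := fun s => 12 * s + 4 * ξ)
    hI hI' hS hS' hS'' (fun x _ => hF (S x)) (fun x _ => hf (S x))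
    (fun x hx => (hode x hx).trans (by ring))
  exact ⟨2 * k, c, fun x hx => (energy x hx).trans (by ring)⟩

end FirstIntegrals

lemma cubic_eq_depressed {K : Type*} [Field K] (h3 : (3 : K) ≠ 0) (ξ b c x : K) :
    4 * x ^ 3 + 4 * ξ * x ^ 2 + b * x + c =
      4 * (x + ξ / 3) ^ 3 - (4 * ξ ^ 2 / 3 - b) * (x + ξ / 3) -
        (b * ξ / 3 - 8 * ξ ^ 3 / 27 - c) := by
  have h27 : (27 : K) = 3 ^ 3 := by norm_num
  rw [h27]
  field_simp
  ring

lemma differentiableOn_iteratedDeriv_of_isOpen {𝕜 E : Type*} [NontriviallyNormedField 𝕜]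
    [NormedAddCommGroup E] [NormedSpace 𝕜 E] {f : 𝕜 → E} {s : Set 𝕜} {n : WithTop ℕ∞} {m : ℕ}
    (hf : ContDiffOn 𝕜 n f s) (hs : IsOpen s) (hmn : m < n) :
    DifferentiableOn 𝕜 (iteratedDeriv m f) s :=
  (hf.differentiableOn_iteratedDerivWithin hmn hs.uniqueDiffOn).congr
    fun _ hx => (iteratedDerivWithin_of_isOpen hs hx).symm

theorem angular_weierstrass_general {𝕜 : Type*} [RCLike 𝕜] {hbar ξ₀ : 𝕜} {I : Set 𝕜}
    (hI : IsOpen I) (hI' : IsPreconnected I) {S : 𝕜 → 𝕜}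
    (hS : ∀ m < 3, DifferentiableOn 𝕜 (iteratedDeriv m S) I)
    (hode : ∀ θ ∈ I,
      hbar ^ 2 * iteratedDeriv 3 S θ = 12 * S θ * deriv S θ + 4 * ξ₀ * deriv S θ) :
    (∃ b c : 𝕜, ∀ θ ∈ I,
        hbar ^ 2 * (deriv S θ) ^ 2
          = 4 * (S θ) ^ 3 + 4 * ξ₀ * (S θ) ^ 2 + b * S θ + c) ∧
    (∃ t₂ t₃ : 𝕜, ∀ θ ∈ I,
        hbar ^ 2 * (deriv (fun θ' => S θ' + ξ₀ / 3) θ) ^ 2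
          = 4 * (S θ + ξ₀ / 3) ^ 3 - t₂ * (S θ + ξ₀ / 3) - t₃) := by
  have hasDeriv : ∀ m < 3, ∀ θ ∈ I,
      HasDerivAt (iteratedDeriv m S) (iteratedDeriv (m + 1) S θ) θ := fun m hm θ hθ => by
    rw [iteratedDeriv_succ]
    exact ((hS m hm).differentiableAt (hI.mem_nhds hθ)).hasDerivAt
  obtain ⟨b, c, cubic⟩ : ∃ b c, ∀ θ ∈ I,
      hbar ^ 2 * deriv S θ ^ 2 = 4 * S θ ^ 3 + 4 * ξ₀ * S θ ^ 2 + b * S θ + c := by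
    rw [← iteratedDeriv_one] at hode ⊢
    exact exists_mul_sq_eq_cubic hI hI' (hasDeriv 0 (by norm_num)) (hasDeriv 1 (by norm_num))
      (hasDeriv 2 (by norm_num)) hode
  refine ⟨⟨b, c, cubic⟩, 4 * ξ₀ ^ 2 / 3 - b, b * ξ₀ / 3 - 8 * ξ₀ ^ 3 / 27 - c, fun θ hθ => ?_⟩
  rw [deriv_add_const, cubic θ hθ]
  exact cubic_eq_depressed three_ne_zero ξ₀ b c (S θ)

/-- Integration of the determining equation `ℏ²S⁽³⁾ = 12SS′ + 4ξ₀S′` on an open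
interval: the angular part satisfies the (shifted) Weierstrass differential
equation `ℏ²(T′)² = 4T³ − t₂T − t₃` with `T = S + ξ₀/3`. -/
theorem angular_weierstrass (hbar ξ₀ : ℝ) (hh : hbar ≠ 0)
    (I : Set ℝ) (hIopen : IsOpen I) (hIconn : I.OrdConnected)
    (S : ℝ → ℝ) (hS : ContDiffOn ℝ 3 S I)
    (hode : ∀ θ ∈ I,
      hbar ^ 2 * iteratedDeriv 3 S θ = 12 * S θ * deriv S θ + 4 * ξ₀ * deriv S θ) :
    (∃ b c : ℝ, ∀ θ ∈ I,
        hbar ^ 2 * (deriv S θ) ^ 2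
          = 4 * (S θ) ^ 3 + 4 * ξ₀ * (S θ) ^ 2 + b * S θ + c) ∧
    (∃ t₂ t₃ : ℝ, ∀ θ ∈ I,
        hbar ^ 2 * (deriv (fun θ' => S θ' + ξ₀ / 3) θ) ^ 2
          = 4 * (S θ + ξ₀ / 3) ^ 3 - t₂ * (S θ + ξ₀ / 3) - t₃) :=
  angular_weierstrass_general hIopen hIconn.isPreconnected
    (fun _ hm => differentiableOn_iteratedDeriv_of_isOpen hS hIopen (by exact_mod_cast hm)) hode
end

section
/- Let ℏ, β₁, β₂ be real constants, let I ⊆ ℝ be an open interval, and let T : I → ℝ be four times continuously differentiable satisfying, for all z ∈ I, the fourth order equation ℏ²z(1+z²)²T⁽⁴⁾ + 4ℏ²(1+z²)(1+3z²)T⁽³⁾ + [2ℏ²z(13+18z²) − 4β₁z + 4β₂ − 4T − 12z(1+z²)T′]T″ − 8(2+3z²)(T′)² − 8β₁T′ + 4ℏ²(1+6z²)T′ = 0. Then there exists a real constant K₁ such that, for all z ∈ I, ℏ²z²(1+z²)²T⁽³⁾ + 2ℏ²z(1+z²)(1+3z²)T″ − 6z²(1+z²)(T′)² + 2(−ℏ²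 + ℏ²z² + 3ℏ²z⁴ − 2β₁z² + 2β₂z − 2zT)T′ + 2T² − 4β₂T = K₁. -/
/-!
The factor `z` is an integrating factor for the determining equation, and the equation is
affine in `ℏ²`, `β₁`, `β₂`, so the four coefficients can be integrated separately. With
`a = z²(1 + z²)²`, `b = a′` and `c = 2(3z⁴ + z² - 1)`, they become
* `(a T⁽³⁾ + b T″ + c T′)′` for `ℏ²`,
* `(-4z² T′)′` for `β₁` and `(4(z T′ - T))′` for `β₂`,
* `(2T² - 4z T T′ - 6z²(1 + z²) T′²)′` for the part quadratic in `T`.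
-/

section Derivatives

variable {𝕜 : Type*} [NontriviallyNormedField 𝕜]

/-- The left-hand side of the determining equation for the angular part `T`, in the variable
`z = tan θ`. -/
noncomputable def determiningExpr (hbar β₁ β₂ : 𝕜) (T : 𝕜 → 𝕜) (z : 𝕜) : 𝕜 :=
  hbar ^ 2 * z * (1 + z ^ 2) ^ 2 * iteratedDeriv 4 T z
    + 4 * hbar ^ 2 * (1 + z ^ 2) * (1 + 3 * z ^ 2) * iteratedDeriv 3 T z
    + (2 * hbar ^ 2 * z * (13 + 18 * z ^ 2) - 4 * β₁ * z + 4 * β₂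
        - 4 * T z - 12 * z * (1 + z ^ 2) * deriv T z) * iteratedDeriv 2 T z
    - 8 * (2 + 3 * z ^ 2) * (deriv T z) ^ 2 - 8 * β₁ * deriv T z
    + 4 * hbar ^ 2 * (1 + 6 * z ^ 2) * deriv T z

/-- The third order expression in `T` whose derivative is `z` times `determiningExpr`. -/
noncomputable def firstIntegral (hbar β₁ β₂ : 𝕜) (T : 𝕜 → 𝕜) (z : 𝕜) : 𝕜 :=
  hbar ^ 2 * z ^ 2 * (1 + z ^ 2) ^ 2 * iteratedDeriv 3 T z
    + 2 * hbar ^ 2 * z * (1 + z ^ 2) * (1 + 3 * z ^ 2) * iteratedDeriv 2 T z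
    - 6 * z ^ 2 * (1 + z ^ 2) * (deriv T z) ^ 2
    + 2 * (-hbar ^ 2 + hbar ^ 2 * z ^ 2 + 3 * hbar ^ 2 * z ^ 4
        - 2 * β₁ * z ^ 2 + 2 * β₂ * z - 2 * z * T z) * deriv T z
    + 2 * (T z) ^ 2 - 4 * β₂ * T z

theorem differentiableOn_iteratedDeriv_of_contDiffOn {F : Type*} [NormedAddCommGroup F]
    [NormedSpace 𝕜 F] {n : WithTop ℕ∞} {k : ℕ} {f : 𝕜 → F} {s : Set 𝕜} (hs : IsOpen s)
    (hf : ContDiffOn 𝕜 n f s) (hk : k < n) : DifferentiableOn 𝕜 (iteratedDeriv k f) s :=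
  (hf.differentiableOn_iteratedDerivWithin hk hs.uniqueDiffOn).congr fun _ hx ↦
    (iteratedDerivWithin_of_isOpen hs hx).symm

theorem hasDerivAt_firstIntegral_hbar_sq_part {T₁ T₂ T₃ : 𝕜 → 𝕜} {t₄ z : 𝕜}
    (h₁ : HasDerivAt T₁ (T₂ z) z) (h₂ : HasDerivAt T₂ (T₃ z) z) (h₃ : HasDerivAt T₃ t₄ z) :
    HasDerivAt
      (fun x ↦ x ^ 2 * (1 + x ^ 2) ^ 2 * T₃ x + 2 * x * (1 + x ^ 2) * (1 + 3 * x ^ 2) * T₂ x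
        + 2 * (3 * x ^ 4 + x ^ 2 - 1) * T₁ x)
      (z * (z * (1 + z ^ 2) ^ 2 * t₄ + 4 * (1 + z ^ 2) * (1 + 3 * z ^ 2) * T₃ z
        + 2 * z * (13 + 18 * z ^ 2) * T₂ z + 4 * (1 + 6 * z ^ 2) * T₁ z)) z := by
  have hz := hasDerivAt_id' z
  have hq : HasDerivAt (fun x : 𝕜 ↦ 1 + x ^ 2) (2 * z) z := by
    simpa using (hasDerivAt_pow 2 z).const_add 1
  have hr : HasDerivAt (fun x : 𝕜 ↦ 1 + 3 * x ^ 2) (6 * z) z :=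
    (((hasDerivAt_pow 2 z).const_mul 3).const_add 1).congr_deriv (by norm_num; ring)
  have ha : HasDerivAt (fun x : 𝕜 ↦ x ^ 2 * (1 + x ^ 2) ^ 2)
      (2 * z * (1 + z ^ 2) * (1 + 3 * z ^ 2)) z :=
    ((hasDerivAt_pow 2 z).fun_mul (hq.fun_pow 2)).congr_deriv (by norm_num; ring)
  have hb : HasDerivAt (fun x : 𝕜 ↦ 2 * x * (1 + x ^ 2) * (1 + 3 * x ^ 2))
      (2 * (1 + 12 * z ^ 2 + 15 * z ^ 4)) z :=
    (((hz.const_mul 2).fun_mul hq).fun_mul hr).congr_deriv (by ring)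
  have hc : HasDerivAt (fun x : 𝕜 ↦ 2 * (3 * x ^ 4 + x ^ 2 - 1)) (4 * z * (1 + 6 * z ^ 2)) z :=
    (((((hasDerivAt_pow 4 z).const_mul 3).fun_add (hasDerivAt_pow 2 z)).sub_const 1).const_mul
      2).congr_deriv (by norm_num; ring)
  exact (((ha.fun_mul h₃).fun_add (hb.fun_mul h₂)).fun_add (hc.fun_mul h₁)).congr_deriv (by ring)

theorem hasDerivAt_firstIntegral_quadratic_part {T T₁ : 𝕜 → 𝕜} {t₂ z : 𝕜}
    (h₀ : HasDerivAt T (T₁ z) z) (h₁ : HasDerivAt T₁ t₂ z) :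
    HasDerivAt
      (fun x ↦ 2 * T x ^ 2 - 4 * x * (T x * T₁ x) - 6 * (x ^ 2 + x ^ 4) * T₁ x ^ 2)
      (z * ((-4 * T z - 12 * z * (1 + z ^ 2) * T₁ z) * t₂ - 8 * (2 + 3 * z ^ 2) * T₁ z ^ 2))
      z := by
  have hTsq : HasDerivAt (fun x ↦ 2 * T x ^ 2) (4 * T z * T₁ z) z :=
    ((h₀.fun_pow 2).const_mul 2).congr_deriv (by norm_num; ring)
  have hTT₁ : HasDerivAt (fun x ↦ 4 * x * (T x * T₁ x))
      (4 * (T z * T₁ z) + 4 * z * (T₁ z ^ 2 + T z * t₂)) z :=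
    (((hasDerivAt_id' z).const_mul 4).fun_mul (h₀.fun_mul h₁)).congr_deriv (by ring)
  have hcoeff : HasDerivAt (fun x : 𝕜 ↦ 6 * (x ^ 2 + x ^ 4)) (12 * z + 24 * z ^ 3) z :=
    (((hasDerivAt_pow 2 z).fun_add (hasDerivAt_pow 4 z)).const_mul 6).congr_deriv
      (by norm_num; ring)
  have hT₁sq : HasDerivAt (fun x ↦ T₁ x ^ 2) (2 * T₁ z * t₂) z := by
    simpa using h₁.fun_pow 2
  exact ((hTsq.fun_sub hTT₁).fun_sub (hcoeff.fun_mul hT₁sq)).congr_deriv (by ring)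

theorem hasDerivAt_firstIntegral (hbar β₁ β₂ : 𝕜) {T : 𝕜 → 𝕜} {z : 𝕜}
    (hT : ∀ k < 4, DifferentiableAt 𝕜 (iteratedDeriv k T) z) :
    HasDerivAt (firstIntegral hbar β₁ β₂ T) (z * determiningExpr hbar β₁ β₂ T z) z := by
  have hasDerivAt_iteratedDeriv (k : ℕ) (hk : k < 4) :
      HasDerivAt (iteratedDeriv k T) (iteratedDeriv (k + 1) T z) z := by
    simpa only [iteratedDeriv_succ] using (hT k hk).hasDerivAt
  have h₀ : HasDerivAt T (deriv T z) z := by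
    simpa using hasDerivAt_iteratedDeriv 0 (by norm_num)
  have h₁ : HasDerivAt (deriv T) (iteratedDeriv 2 T z) z := by
    simpa using hasDerivAt_iteratedDeriv 1 (by norm_num)
  have h₂ := hasDerivAt_iteratedDeriv 2 (by norm_num)
  have h₃ := hasDerivAt_iteratedDeriv 3 (by norm_num)
  have h_hbar_sq := hasDerivAt_firstIntegral_hbar_sq_part h₁ h₂ h₃
  have h_quadratic := hasDerivAt_firstIntegral_quadratic_part h₀ h₁
  have h_β₁ : HasDerivAt (fun x ↦ x ^ 2 * deriv T x)
      (z * (2 * deriv T z + z * iteratedDeriv 2 T z)) z :=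
    ((hasDerivAt_pow 2 z).fun_mul h₁).congr_deriv (by norm_num; ring)
  have h_β₂ : HasDerivAt (fun x ↦ x * deriv T x - T x) (z * iteratedDeriv 2 T z) z :=
    (((hasDerivAt_id' z).fun_mul h₁).fun_sub h₀).congr_deriv (by ring)
  have h_sum := (((h_hbar_sq.const_mul (hbar ^ 2)).fun_add (h_β₁.const_mul (-4 * β₁))).fun_add
    (h_β₂.const_mul (4 * β₂))).fun_add h_quadratic
  refine (h_sum.congr_deriv ?_).congr_of_eventuallyEq (.of_forall fun x ↦ ?_)
  · rw [determiningExpr]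
    ring
  · rw [firstIntegral]
    ring

end Derivatives

theorem fourth_order_first_integral_general {𝕜 : Type*} [RCLike 𝕜] (hbar β₁ β₂ : 𝕜)
    {U : Set 𝕜} (hUopen : IsOpen U) (hUconn : IsPreconnected U) {T : 𝕜 → 𝕜}
    (hT : ∀ k < 4, DifferentiableOn 𝕜 (iteratedDeriv k T) U)
    (heq : ∀ z ∈ U, determiningExpr hbar β₁ β₂ T z = 0) :
    ∃ K₁ : 𝕜, ∀ z ∈ U, firstIntegral hbar β₁ β₂ T z = K₁ := by
  have hderiv : ∀ z ∈ U, HasDerivAt (firstIntegral hbar β₁ β₂ T) 0 z := fun z hz ↦ by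
    simpa only [heq z hz, mul_zero] using hasDerivAt_firstIntegral hbar β₁ β₂
      fun k hk ↦ (hT k hk).differentiableAt (hUopen.mem_nhds hz)
  exact hUopen.exists_is_const_of_deriv_eq_zero hUconn
    (fun z hz ↦ (hderiv z hz).differentiableAt.differentiableWithinAt)
    (fun z hz ↦ (hderiv z hz).deriv)

/-- First integration of the fourth order determining equation (after the
substitution `z = tan θ`) for the angular part of a superintegrable potential
`V(r,θ) = T′(θ)/r²`: on an open interval, every `C⁴` solution of the fourth
order equation makes the displayed third order expression constant. -/
theorem fourth_order_first_integral (hbar β₁ β₂ : ℝ)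
    (I : Set ℝ) (hIopen : IsOpen I) (hIconn : I.OrdConnected)
    (T : ℝ → ℝ) (hT : ContDiffOn ℝ 4 T I)
    (heq : ∀ z ∈ I,
      hbar ^ 2 * z * (1 + z ^ 2) ^ 2 * iteratedDeriv 4 T z
        + 4 * hbar ^ 2 * (1 + z ^ 2) * (1 + 3 * z ^ 2) * iteratedDeriv 3 T z
        + (2 * hbar ^ 2 * z * (13 + 18 * z ^ 2) - 4 * β₁ * z + 4 * β₂
            - 4 * T z - 12 * z * (1 + z ^ 2) * deriv T z) * iteratedDeriv 2 T z
        - 8 * (2 + 3 * z ^ 2) * (deriv T z) ^ 2 - 8 * β₁ * deriv T z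
        + 4 * hbar ^ 2 * (1 + 6 * z ^ 2) * deriv T z = 0) :
    ∃ K₁ : ℝ, ∀ z ∈ I,
      hbar ^ 2 * z ^ 2 * (1 + z ^ 2) ^ 2 * iteratedDeriv 3 T z
        + 2 * hbar ^ 2 * z * (1 + z ^ 2) * (1 + 3 * z ^ 2) * iteratedDeriv 2 T z
        - 6 * z ^ 2 * (1 + z ^ 2) * (deriv T z) ^ 2
        + 2 * (-hbar ^ 2 + hbar ^ 2 * z ^ 2 + 3 * hbar ^ 2 * z ^ 4
            - 2 * β₁ * z ^ 2 + 2 * β₂ * z - 2 * z * T z) * deriv T z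
        + 2 * (T z) ^ 2 - 4 * β₂ * T z = K₁ :=
  fourth_order_first_integral_general hbar β₁ β₂ hIopen hIconn.isPreconnected
    (fun _ hk ↦ differentiableOn_iteratedDeriv_of_contDiffOn hIopen hT (mod_cast hk)) heq
end

section
/- Let β₁, β₂, K₁ be real constants and consider the 3×3 symmetric matrix M(z) = [[3z²(1+z²), z, β₁z² − β₂z], [z, −1, β₂], [β₁z² − β₂z, β₂, K₁/2]]. Then det M(z) = 0 for all z ∈ ℝ if and only if β₁ = 0 and K₁ = −2β₂². -/
/-!
Because the middle diagonal entry of `M(z)` is `-1`, completing the square along the middle row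
writes the determinant as a square minus a product. The `β₂ z` terms cancel in the square, which
leaves `z²` times an affine function of `z²`; such a function vanishes at two distinct values of
`z²` only if both its coefficients are zero.
-/

theorem det_symm_fin_three_of_neg_one {R : Type*} [CommRing R] (a b d e f : R) :
    Matrix.det !![a, b, d; b, -1, e; d, e, f] =
      (d + b * e) ^ 2 - (a + b ^ 2) * (f + e ^ 2) := by
  rw [Matrix.det_fin_three]
  simp only [Matrix.of_apply, Matrix.cons_val]
  ring

theorem eq_zero_and_eq_zero_of_mul_add_eq_zero {R : Type*} [Ring R] [NoZeroDivisors R]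
    {u v s t : R} (hst : s ≠ t) (hs : u * s + v = 0) (ht : u * t + v = 0) :
    u = 0 ∧ v = 0 := by
  have hmul : u * s = u * t := add_right_cancel (hs.trans ht.symm)
  have hu : u = 0 := (mul_eq_mul_left_iff.mp hmul).resolve_left hst
  exact ⟨hu, by simpa [hu] using hs⟩

section CoefficientMatrix

variable {F : Type*} [Field F]

/-- The matrix `M(z)` whose quadratic form at `(T', T, 1)` is the left-hand side of the first order
second degree equation, with parameters in an arbitrary field. -/
def coefficientMatrix (β₁ β₂ K₁ z : F) : Matrix (Fin 3) (Fin 3) F :=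
  !![3 * z ^ 2 * (1 + z ^ 2), z, β₁ * z ^ 2 - β₂ * z;
     z, -1, β₂;
     β₁ * z ^ 2 - β₂ * z, β₂, K₁ / 2]

theorem det_coefficientMatrix (β₁ β₂ K₁ z : F) :
    (coefficientMatrix β₁ β₂ K₁ z).det =
      z ^ 2 * ((β₁ ^ 2 - 3 * (K₁ / 2 + β₂ ^ 2)) * z ^ 2 + -4 * (K₁ / 2 + β₂ ^ 2)) := by
  rw [coefficientMatrix, det_symm_fin_three_of_neg_one]
  ring

variable [NeZero (2 : F)]

theorem half_add_sq_eq_zero_iff {K β : F} : K / 2 + β ^ 2 = 0 ↔ K = -2 * β ^ 2 := by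
  rw [add_eq_zero_iff_eq_neg, div_eq_iff two_ne_zero, neg_mul_comm, mul_comm]

theorem params_eq_of_det_coefficientMatrix_eq_zero {β₁ β₂ K₁ z w : F}
    (hz : z ≠ 0) (hw : w ≠ 0) (hzw : z ^ 2 ≠ w ^ 2)
    (hdetz : (coefficientMatrix β₁ β₂ K₁ z).det = 0)
    (hdetw : (coefficientMatrix β₁ β₂ K₁ w).det = 0) :
    β₁ = 0 ∧ K₁ = -2 * β₂ ^ 2 := by
  rw [det_coefficientMatrix] at hdetz hdetw
  obtain ⟨hslope, hconst⟩ := eq_zero_and_eq_zero_of_mul_add_eq_zero hzw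
    ((mul_eq_zero_iff_left (pow_ne_zero 2 hz)).mp hdetz)
    ((mul_eq_zero_iff_left (pow_ne_zero 2 hw)).mp hdetw)
  have hfour : (-4 : F) ≠ 0 := by
    rw [← two_add_two_eq_four, ← two_mul]
    exact neg_ne_zero.mpr (mul_ne_zero two_ne_zero two_ne_zero)
  have hK : K₁ / 2 + β₂ ^ 2 = 0 := (mul_eq_zero_iff_left hfour).mp hconst
  have hβ : β₁ ^ 2 = 0 := by simpa [hK] using hslope
  exact ⟨sq_eq_zero_iff.mp hβ, half_add_sq_eq_zero_iff.mp hK⟩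

theorem det_condition_iff_general [Infinite F] (β₁ β₂ K₁ : F) :
    (∀ z : F, (coefficientMatrix β₁ β₂ K₁ z).det = 0) ↔ β₁ = 0 ∧ K₁ = -2 * β₂ ^ 2 := by
  constructor
  · classical
    intro hdet
    obtain ⟨w, hw⟩ := Infinite.exists_notMem_finset ({0, 1, -1} : Finset F)
    obtain ⟨hw_zero, hw_one, hw_neg_one⟩ : w ≠ 0 ∧ w ≠ 1 ∧ w ≠ -1 := by simpa using hw
    have hw_sq : w ^ 2 ≠ 1 ^ 2 := by simp [hw_one, hw_neg_one]
    exact params_eq_of_det_coefficientMatrix_eq_zero hw_zero one_ne_zero hw_sq (hdet w) (hdet 1)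
  · rintro ⟨hβ, hK⟩ z
    simp [det_coefficientMatrix, hβ, half_add_sq_eq_zero_iff.mpr hK]

end CoefficientMatrix

/-- The determinant of the coefficient matrix of the first order second degree
equation `3z²(1+z²)T'² + 2zTT' − T² + 2(β₁z² − β₂z)T' + 2β₂T + K₁/2 = 0`
vanishes identically iff `β₁ = 0` and `K₁ = −2β₂²`. -/
theorem det_condition_iff (β₁ β₂ K₁ : ℝ) :
    (∀ z : ℝ,
      (Matrix.det !![3 * z ^ 2 * (1 + z ^ 2), z, β₁ * z ^ 2 - β₂ * z;
                     z, -1, β₂;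
                     β₁ * z ^ 2 - β₂ * z, β₂, K₁ / 2]) = 0) ↔
    (β₁ = 0 ∧ K₁ = -2 * β₂ ^ 2) :=
  det_condition_iff_general β₁ β₂ K₁
end
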